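/- arXiv:1409.6243 — 3 statements merged into one kernel-verified Lean document; each statement's English description precedes it below -/
import Mathlib

section
/- Let t ≥ 1 and n ≥ 0 be integers and let q ∈ ℂ with 0 < |q| < 1. Then - Σ_{ℓ=0}^{n+1} [ q^{(t+1)ℓ^2 - ℓ} (1 - q^{2ℓ}) / ((q;q)_{n+1-ℓ} (q;q)_{n+1+ℓ}) ] · Σ_{k=-ℓ}^{ℓ-1} (-1)^k q^{-(2t+1)k(k+1)/2 + k} = Σ_{n+1 = k_t ≥ k_{t-1} ≥ … ≥ k_1 ≥ 1} Π_{i=1}^{t-1} q^{k_i^2} [k_{i+1} + k_i - i + 2·Σ_{j=1}^{i-1} k_j choose k_{i+1} - k_i]_q, where the right-hand sum is over all weakly decreasing (t-1)-tuples of integers k_{t-1} ≥ … ≥ k_1 ≥ 1 with k_t fixed equal to n+1 (for t = 1 the right-hand side is 1). In particular, the cyclotomic coefficient C_n(T*_{(2,2t+1)}; q) equals q^{n+1-t} times the right-hand multisum, which is q^{n+1-t} times a polynomial in q with nonnegative integer coefficients. -/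
open Finset

/-- The finite q-Pochhammer symbol `(a;q)_n`. -/
noncomputable def qPoch (q a : ℂ) (n : ℕ) : ℂ := ∏ j ∈ Finset.range n, (1 - a * q ^ j)

/-- The Gaussian binomial coefficient `[n choose k]_q`, zero outside `0 ≤ k ≤ n`. -/
noncomputable def qBinom (q : ℂ) (n k : ℤ) : ℂ :=
  if 0 ≤ k ∧ k ≤ n then
    ∏ j ∈ Finset.range k.toNat, (1 - q ^ (n - k + (j : ℤ) + 1)) / (1 - q ^ ((j : ℤ) + 1))
  else 0

/-- The product `Π_{i=1}^{t-1} q^{k_i^2} [k_{i+1}+k_i-i+2Σ_{j<i}k_j choose k_{i+1}-k_i]_q`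
(tuple of length `t+1`, i.e. the paper's `t` equals `t+1`). -/
noncomputable def UtProd (q : ℂ) (t : ℕ) (K : Fin (t+1) → ℕ) : ℂ :=
  ∏ i : Fin t, (q ^ (K i.castSucc ^ 2) *
    qBinom q ((K i.succ : ℤ) + (K i.castSucc : ℤ) - ((i : ℕ) + 1)
        + 2 * ∑ j ∈ Finset.univ.filter (fun j : Fin (t+1) => (j : ℕ) < (i : ℕ)), (K j : ℤ))
      ((K i.succ : ℤ) - (K i.castSucc : ℤ)))

/-!
With `T = t + 1`, both sides at level `s = n + 1` are the entry `x₁(s)` of a ladder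
`x₀(s), …, x_{T+1}(s)` that vanishes at `s = 0`, has `x₀(s) = q^s x₁(s)` and a prescribed top rung
`x_{T+1}`, and satisfies
`(1 + q^{2s+1}) x_j(s+1) - x_j(s) = q^{s+1} x_{j+1}(s+1) + q^s x_{j-1}(s+1)` for `1 ≤ j ≤ T`.
Such a ladder is unique: if two of them agree at `s`, their difference at `s + 1` is a geometric
progression in `j`, and it vanishes on the top rung.

On the multisum side, rung `j` replaces `q^{k²}` by `q^{k² - k}` in the outermost `j - 1` sums; the
relation is the `q`-Pascal rule, propagated through further sums by summation by parts. On the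
Pochhammer side, rung `j` replaces `q^l - q^{-l}` by
`(q^{jl} - q^{-jl}) - q^s (q^{(j-1)l} - q^{-(j-1)l})`; the relation then holds term by term, and
on the top rung the theta sums collapse to a telescoping sum.
-/

namespace TorusKnot

section Field

variable {𝕜 : Type*} [Field 𝕜] {q : 𝕜}

/-! ### Gaussian binomials -/

theorem one_sub_pow_succ_ne_zero (hq : ¬IsOfFinOrder q) (m : ℕ) : 1 - q ^ (m + 1) ≠ 0 := fun h ↦
  hq (isOfFinOrder_iff_pow_eq_one.mpr ⟨m + 1, m.succ_pos, (sub_eq_zero.mp h).symm⟩)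

/-- The reciprocal `1 / (q;q)_d` of the `q`-factorial, continued by zero to negative `d`. The
continuation makes `qFactorialInv_sub_one` valid for every integer. -/
def qFactorialInv (q : 𝕜) (d : ℤ) : 𝕜 :=
  if d < 0 then 0 else (∏ j ∈ range d.toNat, (1 - q ^ (j + 1)))⁻¹

theorem qFactorialInv_of_neg {d : ℤ} (hd : d < 0) : qFactorialInv q d = 0 := if_pos hd

theorem qFactorialInv_natCast (d : ℕ) :
    qFactorialInv q d = (∏ j ∈ range d, (1 - q ^ (j + 1)))⁻¹ := by
  simp [qFactorialInv]

theorem qFactorialInv_sub_one (hq : ¬IsOfFinOrder q) (d : ℤ) :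
    qFactorialInv q (d - 1) = (1 - q ^ d) * qFactorialInv q d := by
  rcases lt_trichotomy d 0 with hd | rfl | hd
  · rw [qFactorialInv_of_neg hd, qFactorialInv_of_neg (by lia), mul_zero]
  · simp [qFactorialInv]
  · obtain ⟨m, rfl⟩ : ∃ m : ℕ, d = (m + 1 : ℕ) := ⟨(d - 1).toNat, by lia⟩
    have hm := one_sub_pow_succ_ne_zero hq m
    rw [show ((m + 1 : ℕ) : ℤ) - 1 = m by push_cast; ring, qFactorialInv_natCast,
      qFactorialInv_natCast, prod_range_succ, mul_inv, zpow_natCast]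
    field_simp

/-- The Gaussian binomial coefficient `[d + ν choose d]`, a polynomial in `q ^ ν` for fixed
`d ≥ 0` and hence defined for every integer `ν`; it is zero for `d < 0`. -/
def gaussBinom (q : 𝕜) (d ν : ℤ) : 𝕜 :=
  if d < 0 then 0 else
    ∏ j ∈ range d.toNat, (1 - q ^ (ν + (j : ℤ) + 1)) / (1 - q ^ ((j : ℤ) + 1))

theorem gaussBinom_of_neg {d : ℤ} (hd : d < 0) (ν : ℤ) : gaussBinom q d ν = 0 := if_pos hd

theorem gaussBinom_natCast (d : ℕ) (ν : ℤ) :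
    gaussBinom q d ν = ∏ j ∈ range d, (1 - q ^ (ν + (j : ℤ) + 1)) / (1 - q ^ ((j : ℤ) + 1)) := by
  simp [gaussBinom]

theorem gaussBinom_zero_left (ν : ℤ) : gaussBinom q 0 ν = 1 := by simp [gaussBinom]

theorem gaussBinom_zero_right (hq : ¬IsOfFinOrder q) (d : ℕ) : gaussBinom q d 0 = 1 := by
  rw [gaussBinom_natCast]
  refine prod_eq_one fun j _ ↦ ?_
  rw [zero_add]
  exact div_self (mod_cast one_sub_pow_succ_ne_zero hq j)

theorem gaussBinom_succ_neg_one (d : ℕ) : gaussBinom q (d + 1 : ℕ) (-1) = 0 := by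
  rw [gaussBinom_natCast]
  exact prod_eq_zero (mem_range.mpr d.succ_pos) (by simp)

theorem gaussBinom_succ_sub_one (d : ℕ) (ν : ℤ) :
    gaussBinom q (d + 1 : ℕ) (ν - 1) =
      (1 - q ^ ν) / (1 - q ^ ((d : ℤ) + 1)) * gaussBinom q d ν := by
  have hshift (j : ℕ) : ν - 1 + ((j + 1 : ℕ) : ℤ) + 1 = ν + j + 1 := by push_cast; ring
  rw [gaussBinom_natCast, gaussBinom_natCast, prod_div_distrib, prod_div_distrib,
    prod_range_succ', prod_range_succ (fun j : ℕ ↦ 1 - q ^ ((j : ℤ) + 1))]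
  simp only [hshift, Nat.cast_zero, add_zero, sub_add_cancel]
  rw [mul_div_mul_comm, mul_comm]

theorem gaussBinom_sub_gaussBinom_sub_one (hq0 : q ≠ 0) (hq : ¬IsOfFinOrder q) (d ν : ℤ) :
    gaussBinom q d ν - gaussBinom q (d - 1) ν = q ^ d * gaussBinom q d (ν - 1) := by
  rcases lt_trichotomy d 0 with hd | rfl | hd
  · simp [gaussBinom, hd, hd.trans zero_lt_one]
  · simp [gaussBinom]
  · obtain ⟨m, rfl⟩ : ∃ m : ℕ, d = (m + 1 : ℕ) := ⟨(d - 1).toNat, by lia⟩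
    have hm : 1 - q ^ ((m : ℤ) + 1) ≠ 0 := mod_cast one_sub_pow_succ_ne_zero hq m
    have hsplit : gaussBinom q (m + 1 : ℕ) ν =
        gaussBinom q m ν * ((1 - q ^ ν * q ^ ((m : ℤ) + 1)) / (1 - q ^ ((m : ℤ) + 1))) := by
      rw [gaussBinom_natCast, prod_range_succ, ← gaussBinom_natCast, ← zpow_add₀ hq0, add_assoc]
    rw [gaussBinom_succ_sub_one, hsplit, show ((m + 1 : ℕ) : ℤ) - 1 = m by push_cast; ring,
      Nat.cast_succ]
    field_simp
    ring

/-! ### Multisum functionals -/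

/-- Translation `F ↦ F (· + c)` of functions on `ℤ`. -/
def shift (c : ℤ) : (ℤ → 𝕜) →ₗ[𝕜] ℤ → 𝕜 := LinearMap.funLeft 𝕜 𝕜 (· + c)

theorem shift_apply (c : ℤ) (F : ℤ → 𝕜) (μ : ℤ) : shift c F μ = F (μ + c) := rfl

theorem shift_one_shift_neg_one (F : ℤ → 𝕜) : shift 1 (shift (-1) F) = F := by
  ext μ; simp [shift_apply]

/-- The one-step weight of the multisum: a step that raises the summation index from `k` to `k + d`
moves `μ` to `μ + 2k - 2` and contributes the Gaussian binomial at the new position. -/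
def stepWeight (q : 𝕜) (d k : ℤ) : (ℤ → 𝕜) →ₗ[𝕜] ℤ → 𝕜 :=
  LinearMap.mulLeft 𝕜 (fun μ ↦ gaussBinom q d (μ + 2 * k - 2)) ∘ₗ shift (2 * k - 2)

theorem stepWeight_apply (d k : ℤ) (F : ℤ → 𝕜) (μ : ℤ) :
    stepWeight q d k F μ = gaussBinom q d (μ + 2 * k - 2) * F (μ + 2 * k - 2) := by
  simp [stepWeight, shift_apply, add_sub_assoc]

theorem stepWeight_of_neg {d : ℤ} (hd : d < 0) (k : ℤ) : stepWeight q d k = 0 := by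
  ext F μ
  simp [stepWeight, gaussBinom_of_neg hd]

theorem stepWeight_sub_stepWeight_pred (hq0 : q ≠ 0) (hq : ¬IsOfFinOrder q) (d k : ℤ)
    (F : ℤ → 𝕜) :
    stepWeight q d k (shift (-1) F) - stepWeight q (d - 1) k (shift (-1) F) =
      q ^ d • shift (-1) (stepWeight q d k F) := by
  ext μ
  have hpascal := gaussBinom_sub_gaussBinom_sub_one hq0 hq d (μ + 2 * k - 2)
  simp only [Pi.sub_apply, Pi.smul_apply, smul_eq_mul, stepWeight_apply, shift_apply]
  rw [show μ + -1 + 2 * k - 2 = μ + 2 * k - 2 - 1 by ring, ← sub_mul, hpascal,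
    ← sub_eq_add_neg, mul_assoc]

theorem shift_stepWeight_sub_shift_stepWeight (hq0 : q ≠ 0) (hq : ¬IsOfFinOrder q) (d k : ℤ)
    (F : ℤ → 𝕜) :
    shift 1 (stepWeight q d k F) - shift (-1) (stepWeight q (d - 1) (k + 1) F) =
      q ^ d • stepWeight q d k (shift 1 F) := by
  ext μ
  have hpascal := gaussBinom_sub_gaussBinom_sub_one hq0 hq d (μ + 2 * k - 1)
  simp only [Pi.sub_apply, Pi.smul_apply, smul_eq_mul, stepWeight_apply, shift_apply]
  rw [show μ + 1 + 2 * k - 2 = μ + 2 * k - 1 by ring,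
    show μ + -1 + 2 * (k + 1) - 2 = μ + 2 * k - 1 by ring, ← sub_mul, hpascal,
    show μ + 2 * k - 1 - 1 = μ + 2 * k - 2 by ring,
    show μ + 2 * k - 2 + 1 = μ + 2 * k - 1 by ring, mul_assoc]

/-- The Bailey-type operator `(Φ_s)_s ↦ (∑_{k ≤ s} q^{k² - k} Φ_k ∘ stepWeight q (s - k) k)_s` that
adds one summation index to a sequence of functionals. -/
def transfer (q : 𝕜) (Φ : ℕ → Module.Dual 𝕜 (ℤ → 𝕜)) (s : ℕ) : Module.Dual 𝕜 (ℤ → 𝕜) :=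
  ∑ k ∈ range (s + 1), q ^ ((k : ℤ) ^ 2 - k) • Φ k ∘ₗ stepWeight q (s - k) k

/-- The operator `(Φ_s)_s ↦ (q^s Φ_s ∘ shift 1)_s`; composed with `transfer` it turns the weight
`q^{k² - k}` into `q^{k²}` (see `transfer_twist_apply`). -/
def twist (q : 𝕜) (Φ : ℕ → Module.Dual 𝕜 (ℤ → 𝕜)) (s : ℕ) : Module.Dual 𝕜 (ℤ → 𝕜) :=
  q ^ s • Φ s ∘ₗ shift 1

theorem twist_apply (Φ : ℕ → Module.Dual 𝕜 (ℤ → 𝕜)) (s : ℕ) (F : ℤ → 𝕜) :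
    twist q Φ s F = q ^ s * Φ s (shift 1 F) := rfl

theorem transfer_apply_of_le (Φ : ℕ → Module.Dual 𝕜 (ℤ → 𝕜)) {s N : ℕ} (hs : s ≤ N)
    (F : ℤ → 𝕜) :
    transfer q Φ s F =
      ∑ k ∈ range (N + 1), q ^ ((k : ℤ) ^ 2 - k) * Φ k (stepWeight q (s - k) k F) := by
  simp only [transfer, LinearMap.sum_apply, LinearMap.smul_apply, LinearMap.comp_apply,
    smul_eq_mul]
  refine sum_subset (range_mono (by lia)) fun k _ hk ↦ ?_
  rw [mem_range] at hk
  rw [stepWeight_of_neg (by lia), LinearMap.zero_apply, map_zero, mul_zero]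

theorem transfer_apply (Φ : ℕ → Module.Dual 𝕜 (ℤ → 𝕜)) (s : ℕ) (F : ℤ → 𝕜) :
    transfer q Φ s F =
      ∑ k ∈ range (s + 1), q ^ ((k : ℤ) ^ 2 - k) * Φ k (stepWeight q (s - k) k F) :=
  transfer_apply_of_le Φ le_rfl F

theorem transfer_apply_zero {Φ : ℕ → Module.Dual 𝕜 (ℤ → 𝕜)} (hΦ : Φ 0 = 0) :
    transfer q Φ 0 = 0 := by
  simp [transfer, hΦ]

theorem twist_apply_zero {Φ : ℕ → Module.Dual 𝕜 (ℤ → 𝕜)} (hΦ : Φ 0 = 0) : twist q Φ 0 = 0 := by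
  simp [twist, hΦ]

theorem transfer_twist_apply (hq0 : q ≠ 0) (Φ : ℕ → Module.Dual 𝕜 (ℤ → 𝕜)) (s : ℕ)
    (F : ℤ → 𝕜) :
    transfer q (twist q Φ) s F = ∑ k ∈ range (s + 1), q ^ k ^ 2 *
      Φ k (fun μ ↦ gaussBinom q ((s : ℤ) - k) (μ + 2 * k - 1) * F (μ + 2 * k - 1)) := by
  rw [transfer_apply]
  refine sum_congr rfl fun k _ ↦ ?_
  have hpow : q ^ ((k : ℤ) ^ 2 - k) * q ^ k = q ^ k ^ 2 := by
    rw [← zpow_natCast, ← zpow_add₀ hq0, sub_add_cancel]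
    exact mod_cast rfl
  rw [twist_apply, ← mul_assoc, hpow]
  congr 2
  ext μ
  rw [shift_apply, stepWeight_apply, show μ + 1 + 2 * (k : ℤ) - 2 = μ + 2 * k - 1 by ring]

/-- The three-term relation that links consecutive rungs `A`, `B`, `C` of `multisumLadder`. -/
def ThreeTerm (q : 𝕜) (A B C : ℕ → Module.Dual 𝕜 (ℤ → 𝕜)) : Prop :=
  ∀ s F, B (s + 1) (shift (-1) F) - B s (shift (-1) F) + q ^ (2 * s + 1) * B (s + 1) (shift 1 F) =
    q ^ (s + 1) * C (s + 1) F + q ^ s * A (s + 1) F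

theorem transfer_succ_sub_transfer (hq0 : q ≠ 0) (hq : ¬IsOfFinOrder q)
    (Φ : ℕ → Module.Dual 𝕜 (ℤ → 𝕜)) (s : ℕ) (F : ℤ → 𝕜) :
    transfer q Φ (s + 1) (shift (-1) F) - transfer q Φ s (shift (-1) F) =
      q ^ (s + 1) * ∑ k ∈ range (s + 2), q ^ ((k : ℤ) ^ 2 - 2 * k) *
        Φ k (shift (-1) (stepWeight q ((s + 1 : ℕ) - k) k F)) := by
  rw [transfer_apply, transfer_apply_of_le Φ s.le_succ, ← sum_sub_distrib, mul_sum]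
  refine sum_congr rfl fun k _ ↦ ?_
  have hstep := stepWeight_sub_stepWeight_pred hq0 hq ((s + 1 : ℕ) - k) k F
  rw [show ((s + 1 : ℕ) : ℤ) - k - 1 = s - k by push_cast; ring] at hstep
  have hpow : q ^ ((k : ℤ) ^ 2 - k) * q ^ (((s + 1 : ℕ) : ℤ) - k) =
      q ^ (s + 1) * q ^ ((k : ℤ) ^ 2 - 2 * k) := by
    rw [← zpow_natCast q (s + 1), ← zpow_add₀ hq0, ← zpow_add₀ hq0]
    ring_nf
  rw [← mul_sub, ← map_sub, hstep, map_smul, smul_eq_mul, ← mul_assoc, hpow, mul_assoc]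

theorem pow_mul_transfer_shift_one (hq0 : q ≠ 0) (hq : ¬IsOfFinOrder q)
    (Φ : ℕ → Module.Dual 𝕜 (ℤ → 𝕜)) (s : ℕ) (F : ℤ → 𝕜) :
    q ^ (2 * s + 1) * transfer q Φ (s + 1) (shift 1 F) =
      q ^ (s + 1) * ∑ k ∈ range (s + 2), q ^ ((k : ℤ) ^ 2 - 1) *
        (Φ k (shift 1 (stepWeight q ((s + 1 : ℕ) - k) k F)) -
          Φ k (shift (-1) (stepWeight q ((s + 1 : ℕ) - (k + 1 : ℕ)) (k + 1 : ℕ) F))) := by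
  rw [transfer_apply, mul_sum, mul_sum]
  refine sum_congr rfl fun k _ ↦ ?_
  have hstep := shift_stepWeight_sub_shift_stepWeight hq0 hq ((s + 1 : ℕ) - k) k F
  rw [sub_sub, ← Nat.cast_succ k] at hstep
  have hpow : q ^ (2 * s + 1) * q ^ ((k : ℤ) ^ 2 - k) =
      q ^ (s + 1) * q ^ ((k : ℤ) ^ 2 - 1) * q ^ (((s + 1 : ℕ) : ℤ) - k) := by
    rw [← zpow_natCast, ← zpow_natCast q (s + 1), ← zpow_add₀ hq0, ← zpow_add₀ hq0,
      ← zpow_add₀ hq0]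
    congr 1
    push_cast
    ring
  rw [← map_sub, hstep, map_smul, smul_eq_mul, ← mul_assoc, ← mul_assoc, ← mul_assoc, hpow]

theorem transfer_twist_succ_sub (hq0 : q ≠ 0) (hq : ¬IsOfFinOrder q)
    (Φ : ℕ → Module.Dual 𝕜 (ℤ → 𝕜)) (s : ℕ) (F : ℤ → 𝕜) :
    transfer q (twist q Φ) (s + 1) (shift (-1) F) - transfer q (twist q Φ) s (shift (-1) F) =
      q ^ (s + 1) * transfer q Φ (s + 1) F := by
  rw [transfer_succ_sub_transfer hq0 hq, transfer_apply]
  congr 1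
  refine sum_congr rfl fun k _ ↦ ?_
  have hpow : q ^ ((k : ℤ) ^ 2 - 2 * k) * q ^ k = q ^ ((k : ℤ) ^ 2 - k) := by
    rw [← zpow_natCast, ← zpow_add₀ hq0]
    ring_nf
  rw [twist_apply, shift_one_shift_neg_one, ← mul_assoc, hpow]

theorem threeTerm_transfer_twist (hq0 : q ≠ 0) (hq : ¬IsOfFinOrder q)
    (Φ : ℕ → Module.Dual 𝕜 (ℤ → 𝕜)) :
    ThreeTerm q (twist q (transfer q (twist q Φ))) (transfer q (twist q Φ)) (transfer q Φ) := by
  intro s F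
  rw [transfer_twist_succ_sub hq0 hq, twist_apply]
  ring

theorem ThreeTerm.zpow_mul_apply_succ (hq0 : q ≠ 0) {A B C : ℕ → Module.Dual 𝕜 (ℤ → 𝕜)}
    (h : ThreeTerm q A B C) (k : ℕ) (F : ℤ → 𝕜) :
    q ^ (((k + 1 : ℕ) : ℤ) ^ 2 - 2 * (k + 1 : ℕ)) * B (k + 1) (shift (-1) F) +
        q ^ (((k + 1 : ℕ) : ℤ) ^ 2 - 1) * B (k + 1) (shift 1 F) -
        q ^ ((k : ℤ) ^ 2 - 1) * B k (shift (-1) F) =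
      q ^ (((k + 1 : ℕ) : ℤ) ^ 2 - (k + 1 : ℕ)) * C (k + 1) F +
        q⁻¹ * (q ^ (((k + 1 : ℕ) : ℤ) ^ 2 - (k + 1 : ℕ)) * A (k + 1) F) := by
  set e : ℤ := (k : ℤ) ^ 2 - 1
  have hB₁ : q ^ (((k + 1 : ℕ) : ℤ) ^ 2 - 2 * (k + 1 : ℕ)) = q ^ e := by
    congr 1; push_cast; ring
  have hB₂ : q ^ (((k + 1 : ℕ) : ℤ) ^ 2 - 1) = q ^ e * q ^ (2 * k + 1) := by
    rw [← zpow_natCast, ← zpow_add₀ hq0]; congr 1; push_cast; ring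
  have hC : q ^ (((k + 1 : ℕ) : ℤ) ^ 2 - (k + 1 : ℕ)) = q ^ e * q ^ (k + 1) := by
    rw [← zpow_natCast, ← zpow_add₀ hq0]; congr 1; push_cast; ring
  have hA : q⁻¹ * q ^ (k + 1) = q ^ k := by rw [pow_succ', inv_mul_cancel_left₀ hq0]
  rw [hB₁, hB₂, hC]
  linear_combination q ^ e * h k F - q ^ e * A (k + 1) F * hA

theorem ThreeTerm.transfer (hq0 : q ≠ 0) (hq : ¬IsOfFinOrder q)
    {A B C : ℕ → Module.Dual 𝕜 (ℤ → 𝕜)} (h : ThreeTerm q A B C)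
    (hA : A 0 = 0) (hB : B 0 = 0) (hC : C 0 = 0) :
    ThreeTerm q (transfer q A) (transfer q B) (transfer q C) := by
  intro s F
  set H : ℕ → ℤ → 𝕜 := fun k ↦ stepWeight q ((s + 1 : ℕ) - k) k F with hH
  have hlast : H (s + 2) = 0 := by
    simp only [hH]
    rw [stepWeight_of_neg (by push_cast; lia), LinearMap.zero_apply]
  have hq_pow : q ^ s = q ^ (s + 1) * q⁻¹ := by rw [pow_succ, mul_inv_cancel_right₀ hq0]
  rw [transfer_succ_sub_transfer hq0 hq, pow_mul_transfer_shift_one hq0 hq, hq_pow, mul_assoc,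
    ← mul_add, ← mul_add, transfer_apply, transfer_apply]
  congr 1
  -- Summation by parts in `k` brings the three terms related by `h` to the same index.
  calc
    _ = ∑ k ∈ range (s + 2), (q ^ ((k : ℤ) ^ 2 - 2 * k) * B k (shift (-1) (H k)) +
          q ^ ((k : ℤ) ^ 2 - 1) * B k (shift 1 (H k))) -
        ∑ k ∈ range (s + 2), q ^ ((k : ℤ) ^ 2 - 1) * B k (shift (-1) (H (k + 1))) := by
      simp only [mul_sub, sum_sub_distrib, sum_add_distrib, hH]
      ring
    _ = ∑ k ∈ range (s + 1), (q ^ (((k + 1 : ℕ) : ℤ) ^ 2 - (k + 1 : ℕ)) * C (k + 1) (H (k + 1)) +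
          q⁻¹ * (q ^ (((k + 1 : ℕ) : ℤ) ^ 2 - (k + 1 : ℕ)) * A (k + 1) (H (k + 1)))) := by
      rw [sum_range_succ', sum_range_succ (fun k : ℕ ↦ q ^ ((k : ℤ) ^ 2 - 1) * _), hlast]
      simp only [hB, LinearMap.zero_apply, map_zero, mul_zero, add_zero, ← sum_sub_distrib,
        h.zpow_mul_apply_succ hq0]
    _ = _ := by
      rw [sum_add_distrib, ← mul_sum, sum_range_succ' _ (s + 1), sum_range_succ' _ (s + 1), hA, hC]
      simp only [LinearMap.zero_apply, mul_zero, add_zero, hH]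

/-- The functional `F ↦ q⁻¹ F (-1)` placed at `s = 1`. It is fixed by `transfer` and seeds the
multisums. -/
def seed (q : 𝕜) (s : ℕ) : Module.Dual 𝕜 (ℤ → 𝕜) := if s = 1 then q⁻¹ • LinearMap.proj (-1) else 0

theorem seed_one_apply (F : ℤ → 𝕜) : seed q 1 F = q⁻¹ * F (-1) := rfl

theorem seed_of_ne {s : ℕ} (hs : s ≠ 1) : seed q s = 0 := if_neg hs

theorem transfer_seed : transfer q (seed q) = seed q := by
  ext1 s
  refine LinearMap.ext fun F ↦ ?_
  rw [transfer_apply, sum_eq_single 1 (fun k _ hk ↦ by simp [seed_of_ne hk])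
    (fun hs ↦ by
      rw [show s = 0 by rw [mem_range] at hs; lia, stepWeight_of_neg (by simp)]
      simp)]
  rcases s with _ | _ | s
  · simp [seed_of_ne, stepWeight_of_neg]
  · simp [seed_one_apply, stepWeight_apply, gaussBinom_zero_left]
  · have hbinom := gaussBinom_succ_neg_one (q := q) s
    push_cast at hbinom ⊢
    simp [seed_of_ne, seed_one_apply, stepWeight_apply, hbinom]

/-- The rungs `j = 0, …, T + 1` between the multisum with weights `q^{k²}` (`j = 1`, see
`sum_chains_UtProd`) and `seed` (`j = T + 1`): on rung `j ≥ 1` the outermost `j - 1` sums carry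
`q^{k² - k}` in place of `q^{k²}`. -/
def multisumLadder (q : 𝕜) : ℕ → ℕ → ℕ → Module.Dual 𝕜 (ℤ → 𝕜)
  | 0, 0 => twist q (seed q)
  | 0, _ + 1 => seed q
  | T + 1, 0 => twist q (transfer q (multisumLadder q T 0))
  | T + 1, j + 1 => transfer q (multisumLadder q T j)

theorem multisumLadder_zero_right (T : ℕ) :
    multisumLadder q T 0 = twist q (multisumLadder q T 1) := by
  cases T <;> rfl

theorem multisumLadder_succ_one (T : ℕ) :
    multisumLadder q (T + 1) 1 = transfer q (twist q (multisumLadder q T 1)) := by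
  rw [← multisumLadder_zero_right]; rfl

theorem multisumLadder_self_succ (T : ℕ) : multisumLadder q T (T + 1) = seed q := by
  induction T with
  | zero => rfl
  | succ T ih => rw [multisumLadder, ih, transfer_seed]

theorem multisumLadder_apply_zero (T j : ℕ) : multisumLadder q T j 0 = 0 := by
  have hseed : seed q 0 = 0 := seed_of_ne zero_ne_one
  induction T generalizing j with
  | zero => cases j with
    | zero => exact twist_apply_zero hseed
    | succ j => exact hseed
  | succ T ih => cases j with
    | zero => exact twist_apply_zero (transfer_apply_zero (ih 0))
    | succ j => exact transfer_apply_zero (ih j)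

theorem threeTerm_multisumLadder (hq0 : q ≠ 0) (hq : ¬IsOfFinOrder q) {T j : ℕ} (hj : j < T) :
    ThreeTerm q (multisumLadder q T j) (multisumLadder q T (j + 1))
      (multisumLadder q T (j + 2)) := by
  induction T generalizing j with
  | zero => lia
  | succ T ih =>
    cases j with
    | zero =>
      rw [multisumLadder_zero_right, multisumLadder_succ_one]
      exact threeTerm_transfer_twist hq0 hq (multisumLadder q T 1)
    | succ j =>
      exact (ih (by lia)).transfer hq0 hq (multisumLadder_apply_zero T j)
        (multisumLadder_apply_zero T (j + 1)) (multisumLadder_apply_zero T (j + 2))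

/-! ### Uniqueness of ladders -/

/-- The boundary value problem on `0 ≤ j ≤ T + 1`, `0 ≤ s` that both sides of the torus knot
identity solve. -/
structure IsTorusLadder (q : 𝕜) (T : ℕ) (x : ℕ → ℕ → 𝕜) : Prop where
  apply_zero (j : ℕ) : x j 0 = 0
  bottom (s : ℕ) : x 0 s = q ^ s * x 1 s
  three_term {j : ℕ} (hj : j < T) (s : ℕ) :
    x (j + 1) (s + 1) - x (j + 1) s + q ^ (2 * s + 1) * x (j + 1) (s + 1) =
      q ^ (s + 1) * x (j + 2) (s + 1) + q ^ s * x j (s + 1)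
  top (s : ℕ) : x (T + 1) s = if s = 1 then q⁻¹ else 0

theorem IsTorusLadder.eq {T : ℕ} {x y : ℕ → ℕ → 𝕜} (hx : IsTorusLadder q T x)
    (hy : IsTorusLadder q T y) (s : ℕ) {j : ℕ} (hj : j ≤ T + 1) : x j s = y j s := by
  induction s generalizing j with
  | zero => rw [hx.apply_zero, hy.apply_zero]
  | succ s ih =>
    -- Once the two solutions agree at `s`, their difference at `s + 1` is geometric in `j`.
    have hgeom {i : ℕ} (hi : i ≤ T) : x i (s + 1) - y i (s + 1) =
        q ^ (s + 1) * (x (i + 1) (s + 1) - y (i + 1) (s + 1)) := by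
      induction i with
      | zero => rw [hx.bottom, hy.bottom, mul_sub]
      | succ i ihi =>
        linear_combination hx.three_term hi s - hy.three_term hi s + ih (j := i + 1) (by lia) +
          q ^ s * ihi (by lia)
    refine Nat.decreasingInduction (motive := fun i _ ↦ x i (s + 1) = y i (s + 1))
      (fun i hi ihi ↦ ?_) (by rw [hx.top, hy.top]) hj
    rw [← sub_eq_zero, hgeom (by lia), ihi, sub_self, mul_zero]

theorem isTorusLadder_multisumLadder (hq0 : q ≠ 0) (hq : ¬IsOfFinOrder q) (T : ℕ) :
    IsTorusLadder q T fun j s ↦ multisumLadder q T j s (fun _ ↦ 1) where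
  apply_zero j := by rw [multisumLadder_apply_zero, LinearMap.zero_apply]
  bottom s := by rw [multisumLadder_zero_right]; rfl
  three_term hj s := threeTerm_multisumLadder hq0 hq hj s fun _ ↦ 1
  top s := by
    rw [multisumLadder_self_succ]
    split_ifs with hs
    · rw [hs, seed_one_apply, mul_one]
    · rw [seed_of_ne hs, LinearMap.zero_apply]

/-! ### The Pochhammer sum -/

/-- The antisymmetric Laurent monomial `y ^ j - y ^ (-j)`, a Chebyshev-like sequence in `j`. -/
def antisymmPow (y : 𝕜) (j : ℤ) : 𝕜 := y ^ j - y ^ (-j)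

theorem antisymmPow_zero (y : 𝕜) : antisymmPow y 0 = 0 := by simp [antisymmPow]

theorem antisymmPow_neg (y : 𝕜) (j : ℤ) : antisymmPow y (-j) = -antisymmPow y j := by
  simp [antisymmPow]

theorem antisymmPow_one_left (j : ℤ) : antisymmPow (1 : 𝕜) j = 0 := by simp [antisymmPow]

theorem add_inv_mul_antisymmPow {y : 𝕜} (hy : y ≠ 0) (j : ℤ) :
    (y + y⁻¹) * antisymmPow y j = antisymmPow y (j + 1) + antisymmPow y (j - 1) := by
  simp only [antisymmPow, neg_add, sub_eq_add_neg, zpow_add₀ hy, neg_neg, zpow_one,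
    zpow_neg_one]
  ring

/-- The kernel `1 / ((q;q)_{s-l} (q;q)_{s+l})` of the Pochhammer sum, zero for `s < l`. -/
def baileyKernel (q : 𝕜) (s l : ℕ) : 𝕜 := qFactorialInv q (s - l) * qFactorialInv q (s + l)

theorem baileyKernel_self_succ (s : ℕ) : baileyKernel q s (s + 1) = 0 := by
  rw [baileyKernel, qFactorialInv_of_neg (by push_cast; lia), zero_mul]

theorem baileyKernel_eq_mul_succ (hq0 : q ≠ 0) (hq : ¬IsOfFinOrder q) (s l : ℕ) :
    baileyKernel q s l =
      (1 - q ^ (s + 1) * (q ^ l + (q ^ l)⁻¹) + (q ^ (s + 1)) ^ 2) * baileyKernel q (s + 1) l := by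
  have hsub := qFactorialInv_sub_one hq ((s + 1 : ℕ) - l)
  have hadd := qFactorialInv_sub_one hq ((s + 1 : ℕ) + l)
  rw [show ((s + 1 : ℕ) : ℤ) - l - 1 = s - l by push_cast; ring, zpow_sub₀ hq0] at hsub
  rw [show ((s + 1 : ℕ) : ℤ) + l - 1 = s + l by push_cast; ring, zpow_add₀ hq0] at hadd
  have hql : q ^ l * (q ^ l)⁻¹ = 1 := mul_inv_cancel₀ (pow_ne_zero l hq0)
  rw [baileyKernel, baileyKernel, hsub, hadd, zpow_natCast, zpow_natCast, div_eq_mul_inv]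
  linear_combination (q ^ (s + 1)) ^ 2 * qFactorialInv q ((s + 1 : ℕ) - l) *
    qFactorialInv q ((s + 1 : ℕ) + l) * hql

/-- The Pochhammer sum with coefficients `b` on rung `j` of the ladder. For `j = 1` the last factor
is `q ^ l - q ^ (-l)`, as in the cyclotomic coefficient. -/
def pochhammerLadder (q : 𝕜) (b : ℕ → 𝕜) (j : ℤ) (s : ℕ) : 𝕜 :=
  ∑ l ∈ range (s + 1), b l * baileyKernel q s l *
    (antisymmPow (q ^ l) j - q ^ s * antisymmPow (q ^ l) (j - 1))

theorem pochhammerLadder_apply_zero (b : ℕ → 𝕜) (j : ℤ) : pochhammerLadder q b j 0 = 0 := by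
  simp [pochhammerLadder, antisymmPow_one_left]

theorem pochhammerLadder_one (b : ℕ → 𝕜) (s : ℕ) :
    pochhammerLadder q b 1 s =
      ∑ l ∈ range (s + 1), b l * baileyKernel q s l * antisymmPow (q ^ l) 1 := by
  simp [pochhammerLadder, antisymmPow_zero]

theorem pochhammerLadder_zero (b : ℕ → 𝕜) (s : ℕ) :
    pochhammerLadder q b 0 s = q ^ s * pochhammerLadder q b 1 s := by
  rw [pochhammerLadder_one, pochhammerLadder, mul_sum]
  refine sum_congr rfl fun l _ ↦ ?_
  rw [zero_sub, antisymmPow_zero, antisymmPow_neg]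
  ring

theorem pochhammerLadder_three_term (hq0 : q ≠ 0) (hq : ¬IsOfFinOrder q) (b : ℕ → 𝕜) (j : ℤ)
    (s : ℕ) :
    pochhammerLadder q b j (s + 1) - pochhammerLadder q b j s +
        q ^ (2 * s + 1) * pochhammerLadder q b j (s + 1) =
      q ^ (s + 1) * pochhammerLadder q b (j + 1) (s + 1) +
        q ^ s * pochhammerLadder q b (j - 1) (s + 1) := by
  have hextend : pochhammerLadder q b j s = ∑ l ∈ range (s + 2), b l * baileyKernel q s l *
      (antisymmPow (q ^ l) j - q ^ s * antisymmPow (q ^ l) (j - 1)) := by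
    rw [sum_range_succ, baileyKernel_self_succ, mul_zero, zero_mul, add_zero, pochhammerLadder]
  rw [hextend]
  simp only [pochhammerLadder, mul_sum, ← sum_sub_distrib, ← sum_add_distrib]
  refine sum_congr rfl fun l _ ↦ ?_
  have hj := add_inv_mul_antisymmPow (pow_ne_zero l hq0) j
  have hj' := add_inv_mul_antisymmPow (pow_ne_zero l hq0) (j - 1)
  rw [sub_add_cancel] at hj'
  rw [baileyKernel_eq_mul_succ hq0 hq s l, add_sub_cancel_right]
  linear_combination b l * baileyKernel q (s + 1) l * q ^ (s + 1) * (hj - q ^ s * hj')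

theorem pochhammerLadder_eq_sum_sub (hq0 : q ≠ 0) (hq : ¬IsOfFinOrder q) {b : ℕ → 𝕜}
    (hb : b 0 = 0) (j : ℤ) (s : ℕ) :
    pochhammerLadder q b j s = ∑ M ∈ range s,
      (b M * (q ^ M) ^ j - b (M + 1) * (q ^ (M + 1)) ^ (-j)) *
        (qFactorialInv q (s - M - 1) * qFactorialInv q (s + M)) := by
  have hsummand (l : ℕ) : b l * baileyKernel q s l *
        (antisymmPow (q ^ l) j - q ^ s * antisymmPow (q ^ l) (j - 1)) =
      b l * (q ^ l) ^ j * (qFactorialInv q (s - l - 1) * qFactorialInv q (s + l)) -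
        b l * (q ^ l) ^ (-j) * (qFactorialInv q (s - l) * qFactorialInv q (s + l - 1)) := by
    have hql : q ^ l ≠ 0 := pow_ne_zero l hq0
    rw [qFactorialInv_sub_one hq (s - l), qFactorialInv_sub_one hq (s + l), baileyKernel,
      antisymmPow, antisymmPow, neg_sub, zpow_sub₀ hql, zpow_sub₀ hql, zpow_sub₀ hq0,
      zpow_add₀ hq0, zpow_natCast, zpow_natCast, zpow_neg, zpow_one]
    field_simp
    ring
  rw [pochhammerLadder, sum_congr rfl fun l _ ↦ hsummand l, sum_sub_distrib, sum_range_succ,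
    sum_range_succ', qFactorialInv_of_neg (by lia), hb]
  simp only [zero_mul, mul_zero, add_zero]
  rw [← sum_sub_distrib]
  refine sum_congr rfl fun M _ ↦ ?_
  rw [Nat.cast_succ, sub_add_eq_sub_sub, add_sub_assoc, add_sub_cancel_right, sub_mul]

/-- The inner theta sum of the cyclotomic coefficients of the torus knot `T(2, 2T + 1)`. -/
noncomputable def torusTheta (q : 𝕜) (T l : ℕ) : 𝕜 :=
  ∑ k ∈ Icc (-(l : ℤ)) (l - 1), (-1) ^ k * q ^ (-(2 * (T : ℤ) + 1) * k * (k + 1) / 2 + k)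

theorem torusTheta_zero (T : ℕ) : torusTheta q T 0 = 0 := by simp [torusTheta]

theorem sum_Icc_neg_succ {M : Type*} [AddCommMonoid M] (f : ℤ → M) (l : ℕ) :
    ∑ k ∈ Icc (-((l + 1 : ℕ) : ℤ)) ((l + 1 : ℕ) - 1), f k =
      f l + (f (-l - 1) + ∑ k ∈ Icc (-(l : ℤ)) (l - 1), f k) := by
  have hIcc : Icc (-((l + 1 : ℕ) : ℤ)) ((l + 1 : ℕ) - 1) =
      insert (l : ℤ) (insert (-(l : ℤ) - 1) (Icc (-(l : ℤ)) (l - 1))) := by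
    ext k
    simp only [mem_insert, mem_Icc]
    lia
  rw [hIcc, sum_insert (by simp only [mem_insert, mem_Icc]; lia),
    sum_insert (by simp only [mem_Icc]; lia)]

theorem mul_succ_eq_two_mul_choose (l : ℕ) : l * (l + 1) = 2 * (l + 1).choose 2 := by
  have h := Nat.add_one_mul_choose_eq l 1
  rw [Nat.choose_one_right] at h
  lia

theorem torusTheta_succ (hq0 : q ≠ 0) (T l : ℕ) :
    torusTheta q T (l + 1) = torusTheta q T l +
      (-1) ^ l * q ^ (-(2 * (T : ℤ) + 1) * (l + 1).choose 2) * (q ^ l - (q ^ (l + 1))⁻¹) := by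
  have hexp : -(2 * (T : ℤ) + 1) * l * (l + 1) / 2 = -(2 * (T : ℤ) + 1) * (l + 1).choose 2 := by
    have hchoose : (l : ℤ) * (l + 1) = 2 * (l + 1).choose 2 :=
      mod_cast mul_succ_eq_two_mul_choose l
    rw [mul_assoc, hchoose, mul_left_comm, Int.mul_ediv_cancel_left _ two_ne_zero]
  have hreflect : -(2 * (T : ℤ) + 1) * (-l - 1) * (-l - 1 + 1) / 2 =
      -(2 * (T : ℤ) + 1) * (l + 1).choose 2 := by
    rw [← hexp]; ring_nf
  have hsign : (-1 : 𝕜) ^ (-(l : ℤ) - 1) = -(-1) ^ l := by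
    rw [← neg_add', zpow_neg, ← Nat.cast_succ, zpow_natCast, pow_succ, mul_neg_one, inv_neg,
      ← inv_pow, inv_neg_one]
  have hinv : q ^ (-(l : ℤ) - 1) = (q ^ (l + 1))⁻¹ := by
    rw [← neg_add', zpow_neg, ← Nat.cast_succ, zpow_natCast]
  rw [torusTheta, sum_Icc_neg_succ, hexp, hreflect, hsign, zpow_add₀ hq0, zpow_add₀ hq0, hinv,
    zpow_natCast, zpow_natCast, torusTheta]
  ring

/-- The coefficient of `(q^l - q^{-l}) / ((q;q)_{s-l} (q;q)_{s+l})` in the Pochhammer sum for the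
torus knot `T(2, 2T + 1)`. -/
noncomputable def torusCoeff (q : 𝕜) (T l : ℕ) : 𝕜 := q ^ ((T + 1) * l ^ 2) * torusTheta q T l

theorem torusCoeff_sub_torusCoeff_succ (hq0 : q ≠ 0) (T M : ℕ) :
    torusCoeff q T M * (q ^ M) ^ ((T : ℤ) + 1) -
        torusCoeff q T (M + 1) * (q ^ (M + 1)) ^ (-((T : ℤ) + 1)) =
      (-1) ^ M * q ^ (M + 1).choose 2 * ((q ^ (M + 1))⁻¹ - q ^ M) := by
  set c := (M + 1).choose 2 with hc
  have hchoose : M * (M + 1) = 2 * c := mul_succ_eq_two_mul_choose M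
  have hleft : q ^ ((T + 1) * M ^ 2) * (q ^ M) ^ ((T : ℤ) + 1) = q ^ ((T + 1) * (2 * c)) := by
    rw [← Nat.cast_add_one, zpow_natCast, ← pow_mul, ← pow_add, ← hchoose]
    ring_nf
  have hright : q ^ ((T + 1) * (M + 1) ^ 2) * (q ^ (M + 1)) ^ (-((T : ℤ) + 1)) =
      q ^ ((T + 1) * (2 * c)) := by
    rw [← Nat.cast_add_one, zpow_neg, zpow_natCast, ← pow_mul, ← div_eq_mul_inv,
      div_eq_iff (pow_ne_zero _ hq0), ← pow_add, ← hchoose]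
    ring_nf
  have hcancel : q ^ ((T + 1) * (2 * c)) * q ^ (-(2 * (T : ℤ) + 1) * c) = q ^ c := by
    rw [← zpow_natCast, ← zpow_natCast, ← zpow_add₀ hq0]
    congr 1
    push_cast
    ring
  rw [torusCoeff, torusCoeff, torusTheta_succ hq0, ← hc]
  linear_combination torusTheta q T M * (hleft - hright) -
    (-1) ^ M * (q ^ M - (q ^ (M + 1))⁻¹) * (q ^ (-(2 * (T : ℤ) + 1) * c) * hright + hcancel)

theorem sub_mul_sum_choose_two_mul_qFactorialInv (hq0 : q ≠ 0) (hq : ¬IsOfFinOrder q) (s : ℕ) :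
    (q - q ^ s) * ∑ M ∈ range s, (-1) ^ M * q ^ (M + 1).choose 2 * ((q ^ (M + 1))⁻¹ - q ^ M) *
        (qFactorialInv q (s - M - 1) * qFactorialInv q (s + M)) = 0 := by
  set f : ℕ → 𝕜 := fun M ↦ (-1) ^ M * q ^ M.choose 2 * (q ^ M - 1) *
    (qFactorialInv q (s - M - 1) * qFactorialInv q (s + M - 1)) with hf
  have htelescope (M : ℕ) : (q - q ^ s) * ((-1) ^ M * q ^ (M + 1).choose 2 *
      ((q ^ (M + 1))⁻¹ - q ^ M) * (qFactorialInv q (s - M - 1) * qFactorialInv q (s + M))) =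
      f (M + 1) - f M := by
    have hchoose : (M + 1).choose 2 = M + M.choose 2 := by
      rw [Nat.choose_succ_succ', Nat.choose_one_right]
    simp only [hf]
    rw [Nat.cast_succ, sub_add_eq_sub_sub, ← add_assoc (s : ℤ), add_sub_cancel_right,
      qFactorialInv_sub_one hq (s - M - 1), qFactorialInv_sub_one hq (s + M), hchoose,
      zpow_sub₀ hq0, zpow_sub₀ hq0, zpow_add₀ hq0, zpow_natCast, zpow_natCast, zpow_one]
    field_simp
    ring
  have hlast : f s = 0 := by simp [hf, qFactorialInv_of_neg]
  have hzero : f 0 = 0 := by simp [hf]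
  rw [mul_sum, sum_congr rfl fun M _ ↦ htelescope M, sum_range_sub, hlast, hzero, sub_zero]

theorem sum_choose_two_mul_qFactorialInv (hq0 : q ≠ 0) (hq : ¬IsOfFinOrder q) (s : ℕ) :
    ∑ M ∈ range s, (-1) ^ M * q ^ (M + 1).choose 2 * ((q ^ (M + 1))⁻¹ - q ^ M) *
        (qFactorialInv q (s - M - 1) * qFactorialInv q (s + M)) =
      if s = 1 then q⁻¹ else 0 := by
  split_ifs with hs
  · have h : 1 - q ≠ 0 := by simpa using one_sub_pow_succ_ne_zero hq 0
    have hzero : qFactorialInv q 0 = 1 := by simp [qFactorialInv]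
    have hone : qFactorialInv q 1 = (1 - q)⁻¹ := by simp [qFactorialInv]
    rw [hs, sum_range_one, Nat.cast_one, Nat.cast_zero, sub_zero, sub_self, add_zero, hzero, hone]
    simp only [pow_zero, zero_add, Nat.choose_succ_self, pow_one, one_mul]
    field_simp
  · refine (mul_eq_zero.mp (sub_mul_sum_choose_two_mul_qFactorialInv hq0 hq s)).resolve_left ?_
    rcases s with _ | _ | s
    · simpa [sub_eq_zero, eq_comm (a := q)] using one_sub_pow_succ_ne_zero hq 0
    · exact absurd rfl hs
    · rw [pow_succ', ← mul_one_sub]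
      exact mul_ne_zero hq0 (one_sub_pow_succ_ne_zero hq s)

theorem isTorusLadder_pochhammerLadder (hq0 : q ≠ 0) (hq : ¬IsOfFinOrder q) (T : ℕ) :
    IsTorusLadder q T fun j s ↦ pochhammerLadder q (torusCoeff q T) j s where
  apply_zero j := pochhammerLadder_apply_zero _ _
  bottom s := pochhammerLadder_zero _ s
  three_term {j} _ s := by
    have h := pochhammerLadder_three_term hq0 hq (torusCoeff q T) (j + 1 : ℕ) s
    rwa [Nat.cast_succ, add_sub_cancel_right, add_assoc] at h
  top s := by
    rw [Nat.cast_succ, pochhammerLadder_eq_sum_sub hq0 hq (by simp [torusCoeff, torusTheta_zero])]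
    simp only [torusCoeff_sub_torusCoeff_succ hq0]
    exact sum_choose_two_mul_qFactorialInv hq0 hq s

theorem pochhammerLadder_torusCoeff_one_eq_multisumLadder (hq0 : q ≠ 0) (hq : ¬IsOfFinOrder q)
    (T s : ℕ) :
    pochhammerLadder q (torusCoeff q T) 1 s = multisumLadder q T 1 s fun _ ↦ 1 :=
  (isTorusLadder_pochhammerLadder hq0 hq T).eq (isTorusLadder_multisumLadder hq0 hq T) s
    (Nat.le_add_left 1 T)

end Field

/-! ### Sums over chains -/

section Chains

variable {t B : ℕ} {q : ℂ}

/-- The summation range of the multisum: tuples `1 ≤ k 0 ≤ ⋯ ≤ k t = s` with entries below `B`. -/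
def chains (t B s : ℕ) : Finset (Fin (t + 1) → Fin B) :=
  {k | (∀ i : Fin t, k i.castSucc ≤ k i.succ) ∧ (k (Fin.last t) : ℕ) = s ∧ 1 ≤ (k 0 : ℕ)}

theorem mem_chains {s : ℕ} {k : Fin (t + 1) → Fin B} : k ∈ chains t B s ↔
    (∀ i : Fin t, k i.castSucc ≤ k i.succ) ∧ (k (Fin.last t) : ℕ) = s ∧ 1 ≤ (k 0 : ℕ) := by
  simp [chains]

theorem one_le_of_mem_chains {s : ℕ} {k : Fin (t + 1) → Fin B} (hk : k ∈ chains t B s)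
    (i : Fin (t + 1)) : 1 ≤ (k i : ℕ) := by
  obtain ⟨hstep, -, hzero⟩ := mem_chains.mp hk
  exact hzero.trans (Fin.monotone_iff_le_succ.mpr hstep (Fin.zero_le i))

theorem snoc_mem_chains {k : Fin (t + 1) → Fin B} {s : Fin B} :
    (Fin.snoc k s : Fin (t + 2) → Fin B) ∈ chains (t + 1) B s ↔
      k (Fin.last t) ≤ s ∧ k ∈ chains t B (k (Fin.last t)) := by
  simp only [mem_chains, Fin.forall_fin_succ', Fin.succ_castSucc, Fin.succ_last, Fin.snoc_castSucc,
    Fin.snoc_last, ← Fin.castSucc_zero]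
  tauto

theorem sum_chains_succ {M : Type*} [AddCommMonoid M] (s : Fin B)
    (f : (Fin (t + 2) → Fin B) → M) :
    ∑ k ∈ chains (t + 1) B s, f k =
      ∑ m ∈ range (s + 1), ∑ k ∈ chains t B m, f (Fin.snoc k s) := by
  have hsnoc {k : Fin (t + 2) → Fin B} (hk : k ∈ chains (t + 1) B s) :
      Fin.snoc (Fin.init k) s = k := by
    rw [← Fin.ext (mem_chains.mp hk).2.1]
    exact Fin.snoc_init_self k
  have hinit {k : Fin (t + 2) → Fin B} (hk : k ∈ chains (t + 1) B s) :=
    snoc_mem_chains.mp ((hsnoc hk).symm ▸ hk)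
  rw [← sum_fiberwise_of_maps_to (g := fun k ↦ (Fin.init k (Fin.last t) : ℕ))
    fun k hk ↦ mem_range_succ_iff.mpr (hinit hk).1]
  refine sum_congr rfl fun m hm ↦ sum_nbij' Fin.init (fun k ↦ Fin.snoc k s) ?_ ?_ ?_ ?_ ?_
  · intro k hk
    obtain ⟨hchain, rfl⟩ := mem_filter.mp hk
    exact (hinit hchain).2
  · intro k hk
    obtain rfl := (mem_chains.mp hk).2.1
    refine mem_filter.mpr ⟨snoc_mem_chains.mpr ⟨mem_range_succ_iff.mp hm, hk⟩, ?_⟩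
    rw [Fin.init_snoc]
  · exact fun k hk ↦ hsnoc (mem_filter.mp hk).1
  · exact fun k _ ↦ Fin.init_snoc _ _
  · exact fun k hk ↦ by rw [hsnoc (mem_filter.mp hk).1]

/-- The shift `∑ (2 k_j - 1)` over all entries but the last: it is the `ν` of the Gaussian binomial
`[d + ν choose d]` in the last factor of `UtProd`. -/
def chainShift (K : Fin (t + 1) → ℕ) : ℤ := ∑ j : Fin t, (2 * (K j.castSucc : ℤ) - 1)

theorem chainShift_snoc (K : Fin (t + 1) → ℕ) (s : ℕ) :
    chainShift (Fin.snoc K s : Fin (t + 2) → ℕ) = chainShift K + 2 * K (Fin.last t) - 1 := by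
  simp only [chainShift, Fin.snoc_castSucc]
  rw [Fin.sum_univ_castSucc, add_sub_assoc]

theorem UtProd_snoc (K : Fin (t + 1) → ℕ) (s : ℕ) :
    UtProd q (t + 1) (Fin.snoc K s) = UtProd q t K * (q ^ K (Fin.last t) ^ 2 *
      qBinom q (s - K (Fin.last t) + chainShift (Fin.snoc K s : Fin (t + 2) → ℕ))
        (s - K (Fin.last t))) := by
  have hprefix (i : Fin (t + 1)) :
      ∑ j ∈ {j : Fin (t + 2) | (j : ℕ) < i}, ((Fin.snoc K s : Fin (t + 2) → ℕ) j : ℤ) =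
        ∑ j ∈ {j : Fin (t + 1) | (j : ℕ) < i}, (K j : ℤ) := by
    rw [sum_filter, Fin.sum_univ_castSucc, sum_filter, if_neg (by simp), add_zero]
    simp only [Fin.snoc_castSucc, Fin.val_castSucc]
  have hlast : 2 * ∑ j ∈ {j : Fin (t + 1) | (j : ℕ) < Fin.last t}, (K j : ℤ) =
      chainShift K + t := by
    rw [sum_filter, Fin.sum_univ_castSucc, if_neg (lt_irrefl _), add_zero, mul_sum, chainShift]
    simp
  simp only [UtProd, hprefix]
  rw [Fin.prod_univ_castSucc, hlast, chainShift_snoc]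
  simp only [Fin.succ_castSucc, Fin.succ_last, Fin.snoc_castSucc, Fin.snoc_last, Fin.val_castSucc,
    Fin.val_last]
  ring_nf

theorem qBinom_add_eq_gaussBinom {d ν : ℤ} (hd : 0 ≤ d) (hν : 0 ≤ ν) :
    qBinom q (d + ν) d = gaussBinom q d ν := by
  rw [qBinom, if_pos ⟨hd, by lia⟩, gaussBinom, if_neg hd.not_gt, add_sub_cancel_left]

theorem chainShift_nonneg {s : ℕ} {k : Fin (t + 1) → Fin B} (hk : k ∈ chains t B s) :
    0 ≤ chainShift fun i ↦ (k i : ℕ) :=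
  sum_nonneg fun j _ ↦ by have := one_le_of_mem_chains hk j.castSucc; lia

theorem val_snoc (k : Fin (t + 1) → Fin B) (s : Fin B) :
    (fun i ↦ ((Fin.snoc k s : Fin (t + 2) → Fin B) i : ℕ)) =
      (Fin.snoc (fun i ↦ (k i : ℕ)) (s : ℕ) : Fin (t + 2) → ℕ) :=
  Fin.comp_snoc Fin.val k s

theorem UtProd_snoc_of_mem_chains {m : ℕ} {k : Fin (t + 1) → Fin B} {s : Fin B}
    (hk : k ∈ chains t B m) (hm : m ≤ s) :
    UtProd q (t + 1) (fun i ↦ ((Fin.snoc k s : Fin (t + 2) → Fin B) i : ℕ)) =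
      UtProd q t (fun i ↦ (k i : ℕ)) * (q ^ m ^ 2 *
        gaussBinom q (s - m) (chainShift (fun i ↦ (k i : ℕ)) + 2 * m - 1)) := by
  have hlast := (mem_chains.mp hk).2.1
  have hone := one_le_of_mem_chains hk (Fin.last t)
  have hshift := chainShift_nonneg hk
  rw [val_snoc, UtProd_snoc, chainShift_snoc, hlast, qBinom_add_eq_gaussBinom (by lia) (by lia)]

theorem multisumLadder_one_one_succ (hq0 : q ≠ 0) (hq : ¬IsOfFinOrder q) (s : ℕ) (F : ℤ → ℂ) :
    multisumLadder q 1 1 (s + 1) F = F 0 := by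
  rw [multisumLadder_succ_one, transfer_twist_apply hq0,
    sum_eq_single 1 (fun k _ hk ↦ by simp [multisumLadder, seed_of_ne hk]) (by simp)]
  simp [multisumLadder, seed_one_apply, hq0, gaussBinom_zero_right hq]

theorem sum_chains_UtProd (hq0 : q ≠ 0) (hq : ¬IsOfFinOrder q) (t : ℕ) (s : Fin B) (F : ℤ → ℂ) :
    ∑ k ∈ chains t B s, UtProd q t (fun i ↦ (k i : ℕ)) * F (chainShift fun i ↦ (k i : ℕ)) =
      multisumLadder q (t + 1) 1 s F := by
  induction t generalizing s F with
  | zero =>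
    rcases hs : (s : ℕ) with _ | m
    · rw [multisumLadder_apply_zero, LinearMap.zero_apply]
      refine sum_eq_zero fun k hk ↦ ?_
      have hlast := (mem_chains.mp hk).2.1
      have := one_le_of_mem_chains hk (Fin.last 0)
      lia
    · have hchains : chains 0 B (m + 1) = {fun _ ↦ s} := by
        ext k
        simp +contextual [mem_chains, funext_iff, Fin.ext_iff, hs]
      rw [multisumLadder_one_one_succ hq0 hq, hchains, sum_singleton]
      simp [UtProd, chainShift]
  | succ t ih =>
    rw [sum_chains_succ, multisumLadder_succ_one, transfer_twist_apply hq0]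
    refine sum_congr rfl fun m hm ↦ ?_
    have hms : m ≤ s := mem_range_succ_iff.mp hm
    rw [← ih ⟨m, hms.trans_lt s.isLt⟩, mul_sum]
    refine sum_congr rfl fun k hk ↦ ?_
    have hlast : (k (Fin.last t) : ℕ) = m := (mem_chains.mp hk).2.1
    rw [UtProd_snoc_of_mem_chains hk hms, val_snoc, chainShift_snoc, hlast]
    ring

end Chains

theorem pochhammerLadder_torusCoeff_one_eq_sum_qPoch {q : ℂ} (hq0 : q ≠ 0) (t n : ℕ) :
    pochhammerLadder q (torusCoeff q (t + 1)) 1 (n + 1) = -(∑ l ∈ range (n + 2),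
      q ^ ((t + 2) * l ^ 2 - l) * (1 - q ^ (2 * l)) /
          (qPoch q q (n + 1 - l) * qPoch q q (n + 1 + l)) *
        ∑ k ∈ Icc (-(l : ℤ)) ((l : ℤ) - 1),
          (-1 : ℂ) ^ k * q ^ (-(2 * (t : ℤ) + 3) * k * (k + 1) / 2 + k)) := by
  rw [pochhammerLadder_one, ← sum_neg_distrib]
  refine sum_congr rfl fun l hl ↦ ?_
  have hl : l ≤ n + 1 := mem_range_succ_iff.mp hl
  have hqFactorialInv (d : ℕ) : qFactorialInv q d = (qPoch q q d)⁻¹ := by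
    simp only [qFactorialInv_natCast, qPoch, pow_succ']
  have hkernel : baileyKernel q (n + 1) l =
      (qPoch q q (n + 1 - l) * qPoch q q (n + 1 + l))⁻¹ := by
    rw [baileyKernel, ← Nat.cast_sub hl, ← Nat.cast_add, hqFactorialInv, hqFactorialInv, mul_inv]
  have htheta : torusTheta q (t + 1) l = ∑ k ∈ Icc (-(l : ℤ)) ((l : ℤ) - 1),
      (-1 : ℂ) ^ k * q ^ (-(2 * (t : ℤ) + 3) * k * (k + 1) / 2 + k) := by
    rw [torusTheta, Nat.cast_succ]
    ring_nf
  have hmonomial : q ^ ((t + 2) * l ^ 2) * antisymmPow (q ^ l) 1 =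
      -(q ^ ((t + 2) * l ^ 2 - l) * (1 - q ^ (2 * l))) := by
    have hle : l ≤ (t + 2) * l ^ 2 :=
      (Nat.le_self_pow two_ne_zero l).trans (Nat.le_mul_of_pos_left _ (by lia))
    rw [antisymmPow, zpow_one, zpow_neg_one, pow_sub₀ q hq0 hle, mul_comm 2 l, pow_mul]
    field_simp
    ring
  rw [torusCoeff, hkernel, ← htheta]
  linear_combination torusTheta q (t + 1) l *
    (qPoch q q (n + 1 - l) * qPoch q q (n + 1 + l))⁻¹ * hmonomial

end TorusKnot

open TorusKnot in
theorem stmt4_general (t n : ℕ) (q : ℂ)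
    (hq0 : q ≠ 0) (hq : ¬IsOfFinOrder q) :
    -(∑ l ∈ Finset.range (n + 2),
      q ^ ((t + 2) * l ^ 2 - l) * (1 - q ^ (2 * l)) /
          (qPoch q q (n + 1 - l) * qPoch q q (n + 1 + l)) *
        ∑ k ∈ Finset.Icc (-(l : ℤ)) ((l : ℤ) - 1),
          (-1 : ℂ) ^ k * q ^ (-(2 * (t : ℤ) + 3) * k * (k + 1) / 2 + k)) =
    ∑ k ∈ Finset.univ.filter
        (fun k : Fin (t+1) → Fin (n+2) =>
          (∀ i : Fin t, k i.castSucc ≤ k i.succ) ∧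
          (k (Fin.last t) : ℕ) = n + 1 ∧ 1 ≤ (k 0 : ℕ)),
      UtProd q t (fun i => (k i : ℕ)) := by
  rw [← pochhammerLadder_torusCoeff_one_eq_sum_qPoch hq0,
    pochhammerLadder_torusCoeff_one_eq_multisumLadder hq0 hq]
  simpa only [Fin.val_last, mul_one, chains] using
    (sum_chains_UtProd hq0 hq t (Fin.last (n + 1)) fun _ ↦ 1).symm

/-- the cyclotomic coefficient of the left-handed torus knot as a
positive multisum: `-q^{t-n-1} C_n(T*_{(2,2t+1)};q)` (defining sum on the left) equals
the multisum over tuples `n+1 = k_t ≥ … ≥ k_1 ≥ 1` of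
`Π_i q^{k_i²}·[k_{i+1}+k_i-i+2Σ_{j<i}k_j choose k_{i+1}-k_i]_q`.
Here the paper's `t` is `t+1`. -/
theorem stmt4 (t n : ℕ) (q : ℂ)
    (hq0 : 0 < ‖q‖) (hq1 : ‖q‖ < 1) :
    -(∑ l ∈ Finset.range (n + 2),
      q ^ ((t + 2) * l ^ 2 - l) * (1 - q ^ (2 * l)) /
          (qPoch q q (n + 1 - l) * qPoch q q (n + 1 + l)) *
        ∑ k ∈ Finset.Icc (-(l : ℤ)) ((l : ℤ) - 1),
          (-1 : ℂ) ^ k * q ^ (-(2 * (t : ℤ) + 3) * k * (k + 1) / 2 + k)) =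
    ∑ k ∈ Finset.univ.filter
        (fun k : Fin (t+1) → Fin (n+2) =>
          (∀ i : Fin t, k i.castSucc ≤ k i.succ) ∧
          (k (Fin.last t) : ℕ) = n + 1 ∧ 1 ≤ (k 0 : ℕ)),
      UtProd q t (fun i => (k i : ℕ)) :=
  stmt4_general t n q (norm_pos_iff.mp hq0) fun h ↦ hq1.ne h.norm_eq_one
end

section
/- Let t ≥ 1 and N ≥ 1 be integers and let q ∈ ℂ with 0 < |q| < 1. Then (1 - q^N) · q^{-t} Σ_{1 ≤ k_1 ≤ … ≤ k_t ≤ N} (q^{1+N};q)_{k_t-1} (q^{1-N};q)_{k_t-1} q^{k_t} Π_{i=1}^{t-1} q^{k_i^2} [k_{i+1} + k_i - i + 2·Σ_{j=1}^{i-1} k_j choose k_{i+1} - k_i]_q = (-1)^N q^{-t + N((2t+1)N+1)/2} Σ_{k=-N}^{N-1} (-1)^k q^{-(2t+1)k(k+1)/2 + k}. (Both sides are finite sums; all exponents of q are integers. The left side is (1-q^N)·U_t(-q^N; q), and the identity expresses that U_t(-q^N;q) is the N-colored Jones polynomial of the left-handed torus knot T*_{(2,2t+1)}.) -/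
open Finset

/-!
Splitting the Gaussian binomials into Pochhammer symbols, every inner summation becomes a
terminating hypergeometric sum in which only the weights `(q⁻ᴿ;q)_m / (q;q)_m * q ^ m` and one
earlier sum of the same shape occur. Exchanging the two summations shows that such a summation
is one step of the Bailey chain in base `q⁻¹`, that is, it divides `α i` by `q ^ (i * (i + 1))`.
The innermost sum is trivial because it belongs to the unit Bailey pair, so after the last
summation `α` is known explicitly. What is left is a single sum, at the parameter `q ^ (N + 1)`,
which the `q`-Chu–Vandermonde identity evaluates to `∑ (-1)^i * q ^ (i choose 2) * α i`; this is
the stated bilateral sum with the terms of index `i` and `-i - 1` combined.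
-/

section Antidiagonal

variable {A M : Type*} [AddCommMonoid A] [HasAntidiagonal A] [AddCommMonoid M]

lemma sum_antidiagonal_assoc (n : A) (f : A → A → A → M) :
    ∑ p ∈ antidiagonal n, ∑ r ∈ antidiagonal p.1, f r.1 r.2 p.2 =
      ∑ p ∈ antidiagonal n, ∑ r ∈ antidiagonal p.2, f p.1 r.1 r.2 := by
  simp only [sum_sigma']
  refine sum_nbij' (fun ⟨⟨_, l⟩, ⟨i, j⟩⟩ ↦ ⟨(i, j + l), (j, l)⟩)
    (fun ⟨⟨i, _⟩, ⟨j, l⟩⟩ ↦ ⟨(i + j, l), (i, j)⟩) ?_ ?_ ?_ ?_ fun _ _ ↦ rfl <;>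
  · rintro ⟨⟨_, _⟩, ⟨_, _⟩⟩ h
    simp only [mem_sigma, HasAntidiagonal.mem_antidiagonal] at h ⊢
    obtain ⟨rfl, rfl⟩ := h
    simp [add_assoc]

lemma sum_antidiagonal_left_comm (n : A) (f : A → A → A → M) :
    ∑ p ∈ antidiagonal n, ∑ r ∈ antidiagonal p.2, f p.1 r.1 r.2 =
      ∑ p ∈ antidiagonal n, ∑ r ∈ antidiagonal p.2, f r.1 p.1 r.2 := by
  rw [← sum_antidiagonal_assoc n f, ← sum_antidiagonal_assoc n fun i j l ↦ f j i l]
  refine sum_congr rfl fun p _ ↦ ?_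
  conv_lhs => rw [← HasAntidiagonal.map_swap_antidiagonal, sum_map]
  rfl

end Antidiagonal

lemma sum_antidiagonal_succ_of_pascal {R : Type*} [NonUnitalNonAssocSemiring R] {n : ℕ}
    {a b c : ℕ → R} (F : ℕ → ℕ → R) (hzero : c 0 = a 0)
    (hsucc : ∀ i ≤ n, c (i + 1) = a (i + 1) + b i) (hlast : a (n + 1) = 0) :
    ∑ p ∈ antidiagonal (n + 1), c p.1 * F p.1 p.2 =
      ∑ p ∈ antidiagonal n, (a p.1 * F p.1 (p.2 + 1) + b p.1 * F (p.1 + 1) p.2) := by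
  have shift := (Nat.sum_antidiagonal_succ (n := n) (f := fun p ↦ a p.1 * F p.1 p.2)).symm.trans
    Nat.sum_antidiagonal_succ'
  simp only [hlast, zero_mul, zero_add] at shift
  rw [Nat.sum_antidiagonal_succ, sum_add_distrib, ← shift, hzero, add_assoc, ← sum_add_distrib]
  congr 1
  refine sum_congr rfl fun p hp ↦ ?_
  simp only [hsucc p.1 (HasAntidiagonal.antidiagonal.fst_le hp), add_mul]

lemma choose_two_succ (n : ℕ) : (n + 1).choose 2 = n.choose 2 + n := by
  rw [Nat.choose_succ_succ' n 1, Nat.choose_one_right, add_comm]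

lemma choose_two_add (i j : ℕ) : (i + j).choose 2 = i.choose 2 + j.choose 2 + i * j := by
  induction j with
  | zero => simp
  | succ j ih => rw [← add_assoc, choose_two_succ, choose_two_succ, ih]; ring

lemma two_mul_choose_two_succ (n : ℕ) : 2 * (n + 1).choose 2 = n * (n + 1) := by
  induction n with
  | zero => rfl
  | succ n ih => rw [choose_two_succ, mul_add, ih]; ring

lemma sum_Icc_neg_eq_sum_range {M : Type*} [AddCommMonoid M] (f : ℤ → M) (N : ℕ) :
    ∑ k ∈ Icc (-(N : ℤ)) (N - 1), f k = ∑ k ∈ range N, (f k + f (-k - 1)) := by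
  induction N with
  | zero => simp
  | succ N ih =>
    have split : Icc (-((N + 1 : ℕ) : ℤ)) ((N + 1 : ℕ) - 1) =
        insert (N : ℤ) (insert (-(N : ℤ) - 1) (Icc (-(N : ℤ)) (N - 1))) := by
      ext x; simp only [mem_Icc, mem_insert]; lia
    rw [split, sum_insert (by simp only [mem_Icc, mem_insert]; lia), sum_insert (by simp), ih,
      sum_range_succ, ← add_assoc, add_comm]

lemma pow_mul_inv_pow {K : Type*} [Field K] {q : K} (hq : q ≠ 0) (n : ℕ) :
    q ^ n * q⁻¹ ^ n = 1 := by
  rw [← mul_pow, mul_inv_cancel₀ hq, one_pow]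

section Pochhammer

variable {q : ℂ}

lemma qPoch_zero (q a : ℂ) : qPoch q a 0 = 1 := prod_range_zero _

lemma qPoch_zero_right (q : ℂ) (n : ℕ) : qPoch q 0 n = 1 := by simp [qPoch]

lemma qPoch_add (q a : ℂ) (m n : ℕ) :
    qPoch q a (m + n) = qPoch q a m * qPoch q (a * q ^ m) n := by
  simp only [qPoch, prod_range_add, pow_add, mul_assoc]

lemma qPoch_succ (q a : ℂ) (n : ℕ) : qPoch q a (n + 1) = qPoch q a n * (1 - a * q ^ n) :=
  prod_range_succ _ _

lemma qPoch_succ' (q a : ℂ) (n : ℕ) : qPoch q a (n + 1) = (1 - a) * qPoch q (a * q) n := by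
  rw [add_comm, qPoch_add, pow_one, qPoch_succ, qPoch_zero, pow_zero, mul_one, one_mul]

lemma one_sub_pow_ne_zero (hq : ¬IsOfFinOrder q) {n : ℕ} (hn : n ≠ 0) : 1 - q ^ n ≠ 0 := fun h ↦
  hq <| isOfFinOrder_iff_pow_eq_one.mpr ⟨n, Nat.pos_of_ne_zero hn, (sub_eq_zero.mp h).symm⟩

lemma qPoch_self_ne_zero (hq : ¬IsOfFinOrder q) (n : ℕ) : qPoch q q n ≠ 0 := by
  refine prod_ne_zero_iff.mpr fun j _ ↦ ?_
  rw [← pow_succ']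
  exact one_sub_pow_ne_zero hq j.succ_ne_zero

lemma inv_qPoch_self (hq : ¬IsOfFinOrder q) (m n : ℕ) :
    (qPoch q q m)⁻¹ = (qPoch q q (m + n))⁻¹ * qPoch q (q ^ (m + 1)) n := by
  have hne := qPoch_self_ne_zero hq (m + n)
  rw [qPoch_add, ← pow_succ'] at hne ⊢
  have := right_ne_zero_of_mul hne
  field_simp

lemma qPoch_self_succ (q : ℂ) (n : ℕ) : qPoch q q (n + 1) = qPoch q q n * (1 - q ^ (n + 1)) := by
  rw [qPoch_succ, pow_succ']

lemma inv_pow_add_mul_pow (hq0 : q ≠ 0) (i j : ℕ) : q⁻¹ ^ (i + j) * q ^ i = q⁻¹ ^ j := by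
  rw [pow_add]; linear_combination q⁻¹ ^ j * pow_mul_inv_pow hq0 i

lemma qPoch_inv_pow_zero (hq0 : q ≠ 0) (n : ℕ) : qPoch q (q⁻¹ ^ n) (n + 1) = 0 := by
  rw [qPoch_succ, mul_comm (q⁻¹ ^ n), pow_mul_inv_pow hq0, sub_self, mul_zero]

lemma qPoch_inv_pow_mul_qPoch_self (hq0 : q ≠ 0) (i j : ℕ) :
    qPoch q (q⁻¹ ^ (i + j)) i * q ^ ((i + j) * i) * qPoch q q j =
      (-1) ^ i * q ^ i.choose 2 * qPoch q q (i + j) := by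
  induction i generalizing j with
  | zero => simp [qPoch_zero]
  | succ i ih =>
    have step := ih (j + 1)
    have hlast : (1 - q⁻¹ ^ (i + (j + 1)) * q ^ i) * q ^ (j + 1) = -(1 - q ^ (j + 1)) := by
      rw [inv_pow_add_mul_pow hq0]
      linear_combination -pow_mul_inv_pow hq0 (j + 1)
    rw [qPoch_self_succ] at step
    rw [add_right_comm i 1 j, add_assoc i j 1, qPoch_succ, choose_two_succ,
      show (i + (j + 1)) * (i + 1) = (i + (j + 1)) * i + i + (j + 1) by ring]
    simp only [pow_add _ _ (j + 1), pow_add _ _ i, pow_succ (-1 : ℂ)]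
    simp only [← pow_add]
    linear_combination (qPoch q (q⁻¹ ^ (i + (j + 1))) i * q ^ ((i + (j + 1)) * i) * q ^ i *
      qPoch q q j) * hlast - q ^ i * step

lemma prod_pow_sub_pow (q X : ℂ) (n : ℕ) :
    ∏ i ∈ range n, (X * q ^ n - X * q ^ i) = (-X) ^ n * q ^ n.choose 2 * qPoch q q n := by
  have factor : ∀ i ∈ range n,
      X * q ^ n - X * q ^ i = -X * q ^ i * (1 - q * q ^ (n - 1 - i)) := by
    intro i hi
    have : q ^ n = q ^ i * (q * q ^ (n - 1 - i)) := by
      rw [← pow_succ', ← pow_add]; congr 1; have := mem_range.mp hi; lia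
    rw [this]; ring
  rw [prod_congr rfl factor, prod_mul_distrib, prod_mul_distrib, prod_const, card_range,
    prod_pow_eq_pow_sum, sum_range_id, ← Nat.choose_two_right, qPoch,
    prod_range_reflect (fun i ↦ 1 - q * q ^ i)]

end Pochhammer

section Binomial

variable {q : ℂ}

lemma qBinom_of_lt (q : ℂ) {n k : ℤ} (h : n < k) : qBinom q n k = 0 := if_neg (by lia)

lemma qBinom_of_neg (q : ℂ) (n : ℤ) {k : ℤ} (h : k < 0) : qBinom q n k = 0 := if_neg (by lia)

lemma qBinom_add (q : ℂ) (a k : ℕ) :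
    qBinom q ((a : ℤ) + k) k = qPoch q (q ^ (a + 1)) k / qPoch q q k := by
  rw [qBinom, if_pos (by lia), add_sub_cancel_right, Int.toNat_natCast, qPoch, qPoch,
    ← prod_div_distrib]
  refine prod_congr rfl fun j _ ↦ ?_
  rw [← pow_add, ← pow_succ', ← zpow_natCast q (a + 1 + j), ← zpow_natCast q (j + 1)]
  push_cast
  ring_nf

lemma qBinom_add_eq_div (hq : ¬IsOfFinOrder q) (i j : ℕ) :
    qBinom q ((i + j : ℕ) : ℤ) i = qPoch q q (i + j) / (qPoch q q i * qPoch q q j) := by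
  have hj := qPoch_self_ne_zero hq j
  rw [show ((i + j : ℕ) : ℤ) = (j : ℤ) + i by push_cast; ring, qBinom_add, add_comm i j,
    qPoch_add q q j i, ← pow_succ']
  field_simp

lemma qBinom_zero_right (q : ℂ) (n : ℕ) : qBinom q n 0 = 1 := by simp [qBinom]

lemma qBinom_self (hq : ¬IsOfFinOrder q) (n : ℕ) : qBinom q n n = 1 := by
  have := qBinom_add_eq_div hq n 0
  rwa [add_zero, qPoch_zero, mul_one, div_self (qPoch_self_ne_zero hq n)] at this

lemma qBinom_succ_succ (hq : ¬IsOfFinOrder q) {n i : ℕ} (hi : i ≤ n) :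
    qBinom q (n + 1 : ℕ) (i + 1 : ℕ) = q ^ (i + 1) * qBinom q n (i + 1 : ℕ) + qBinom q n i := by
  obtain rfl | hlt := hi.eq_or_lt
  · rw [qBinom_self hq, qBinom_self hq, qBinom_of_lt q (by lia), mul_zero, zero_add]
  obtain ⟨j, rfl⟩ := Nat.exists_eq_add_of_lt hlt
  have hi1 := qPoch_self_ne_zero hq (i + 1)
  have hj1 := qPoch_self_ne_zero hq (j + 1)
  have htop := qBinom_add_eq_div hq (i + 1) (j + 1)
  have hleft := qBinom_add_eq_div hq (i + 1) j
  have hright := qBinom_add_eq_div hq i (j + 1)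
  rw [show i + 1 + (j + 1) = i + j + 1 + 1 by ring] at htop
  rw [show i + 1 + j = i + j + 1 by ring] at hleft
  rw [show i + (j + 1) = i + j + 1 by ring] at hright
  rw [htop, hleft, hright]
  rw [qPoch_self_succ] at hi1 hj1
  rw [qPoch_self_succ q (i + j + 1), qPoch_self_succ q i, qPoch_self_succ q j]
  have hi2 := left_ne_zero_of_mul hi1
  have hi3 := right_ne_zero_of_mul hi1
  have hj2 := left_ne_zero_of_mul hj1
  have hj3 := right_ne_zero_of_mul hj1
  field_simp
  ring

lemma sum_antidiagonal_succ_qBinom_mul (hq : ¬IsOfFinOrder q) (n : ℕ) (F : ℕ → ℕ → ℂ) :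
    ∑ p ∈ antidiagonal (n + 1), qBinom q (n + 1 : ℕ) p.1 * F p.1 p.2 =
      ∑ p ∈ antidiagonal n, qBinom q n p.1 * (q ^ p.1 * F p.1 (p.2 + 1) + F (p.1 + 1) p.2) := by
  rw [sum_antidiagonal_succ_of_pascal (a := fun i ↦ q ^ i * qBinom q n i)
    (b := fun i ↦ qBinom q n i) (c := fun i ↦ qBinom q (n + 1 : ℕ) i)]
  · exact sum_congr rfl fun _ _ ↦ by ring
  · simp only [Nat.cast_zero, qBinom_zero_right, pow_zero, one_mul]
  · exact fun i hi ↦ qBinom_succ_succ hq hi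
  · rw [qBinom_of_lt q (by lia), mul_zero]

end Binomial

/-- The coefficient `(q⁻ⁿ;q)_j / (q;q)_j · q^j` of the terminating basic hypergeometric series;
it is, up to normalisation, the coefficient of the `j`-th shift in the `n`-th `q`-difference. -/
noncomputable def qDiffCoeff (q : ℂ) (n j : ℕ) : ℂ := qPoch q (q⁻¹ ^ n) j / qPoch q q j * q ^ j

section DifferenceCoefficient

variable {q : ℂ}

lemma qDiffCoeff_zero_right (q : ℂ) (n : ℕ) : qDiffCoeff q n 0 = 1 := by
  simp [qDiffCoeff, qPoch_zero]

lemma qDiffCoeff_succ_self (hq0 : q ≠ 0) (n : ℕ) : qDiffCoeff q n (n + 1) = 0 := by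
  rw [qDiffCoeff, qPoch_inv_pow_zero hq0, zero_div, zero_mul]

lemma qDiffCoeff_succ_succ (hq0 : q ≠ 0) (hq : ¬IsOfFinOrder q) (n j : ℕ) :
    qDiffCoeff q (n + 1) (j + 1) =
      q⁻¹ ^ (j + 1) * qDiffCoeff q n (j + 1) - q⁻¹ ^ j * qDiffCoeff q n j := by
  have hne := qPoch_self_ne_zero hq (j + 1)
  rw [qPoch_self_succ] at hne
  have hj := left_ne_zero_of_mul hne
  have hlast := right_ne_zero_of_mul hne
  have hdrop : q⁻¹ ^ (n + 1) * q = q⁻¹ ^ n := by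
    simpa [add_comm] using inv_pow_add_mul_pow hq0 1 n
  have cancel (m : ℕ) (x : ℂ) : q⁻¹ ^ m * (x * q ^ m) = x := by
    linear_combination x * pow_mul_inv_pow hq0 m
  rw [qDiffCoeff, qDiffCoeff, qDiffCoeff, cancel, cancel, qPoch_succ' q (q⁻¹ ^ (n + 1)), hdrop,
    qPoch_succ q (q⁻¹ ^ n), qPoch_self_succ]
  generalize qPoch q (q⁻¹ ^ n) j = x
  field_simp
  linear_combination -q ^ j * x * hdrop

lemma sum_antidiagonal_succ_qDiffCoeff_mul (hq0 : q ≠ 0) (hq : ¬IsOfFinOrder q) (n : ℕ)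
    (F : ℕ → ℕ → ℂ) :
    ∑ p ∈ antidiagonal (n + 1), qDiffCoeff q (n + 1) p.1 * F p.1 p.2 =
      ∑ p ∈ antidiagonal n,
        qDiffCoeff q n p.1 * (q⁻¹ ^ p.1 * (F p.1 (p.2 + 1) - F (p.1 + 1) p.2)) := by
  rw [sum_antidiagonal_succ_of_pascal (a := fun i ↦ q⁻¹ ^ i * qDiffCoeff q n i)
    (b := fun i ↦ -(q⁻¹ ^ i * qDiffCoeff q n i)) (c := qDiffCoeff q (n + 1))]
  · exact sum_congr rfl fun _ _ ↦ by ring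
  · simp only [qDiffCoeff_zero_right, pow_zero, one_mul]
  · exact fun i _ ↦ by rw [qDiffCoeff_succ_succ hq0 hq, sub_eq_add_neg]
  · rw [qDiffCoeff_succ_self hq0, mul_zero]

theorem sum_qDiffCoeff_mul_qPoch_mul_qPoch (hq0 : q ≠ 0) (hq : ¬IsOfFinOrder q) (n : ℕ)
    (Y Z : ℂ) :
    ∑ p ∈ antidiagonal n, qDiffCoeff q n p.1 * (qPoch q (Y * q ^ p.1) p.2 * qPoch q Z p.1) =
      ∏ i ∈ range n, (Z - Y * q ^ i) := by
  induction n generalizing Y with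
  | zero => simp [qDiffCoeff_zero_right, qPoch_zero]
  | succ n ih =>
    rw [sum_antidiagonal_succ_qDiffCoeff_mul hq0 hq n
      fun j l ↦ qPoch q (Y * q ^ j) l * qPoch q Z j, prod_range_succ', pow_zero, mul_one]
    simp only [pow_succ', ← mul_assoc Y]
    rw [← ih, sum_mul]
    refine sum_congr rfl fun p _ ↦ ?_
    rw [qPoch_succ' q (Y * q ^ p.1), qPoch_succ q Z, mul_right_comm Y (q ^ p.1) q]
    linear_combination qDiffCoeff q n p.1 * qPoch q (Y * q * q ^ p.1) p.2 * qPoch q Z p.1 *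
      (Z - Y) * pow_mul_inv_pow hq0 p.1

/-- Both sides satisfy `S (r + 1) e = e * S r e + z * (1 - e) * S r (e * q)`. -/
theorem sum_qDiffCoeff_mul_qPoch_mul_qPoch_eq_sum_qBinom (hq0 : q ≠ 0) (hq : ¬IsOfFinOrder q)
    (r : ℕ) (e z : ℂ) :
    ∑ p ∈ antidiagonal r, qDiffCoeff q r p.1 * (qPoch q e p.1 * qPoch q z p.1) =
      ∑ p ∈ antidiagonal r, qBinom q r p.1 * (qPoch q z p.1 * e ^ p.1 * z ^ p.2) := by
  induction r generalizing e with
  | zero => simp [qDiffCoeff_zero_right, qPoch_zero, qBinom]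
  | succ r ih =>
    trans e * ∑ p ∈ antidiagonal r, qDiffCoeff q r p.1 * (qPoch q e p.1 * qPoch q z p.1) +
      z * (1 - e) *
        ∑ p ∈ antidiagonal r, qDiffCoeff q r p.1 * (qPoch q (e * q) p.1 * qPoch q z p.1)
    · rw [sum_antidiagonal_succ_qDiffCoeff_mul hq0 hq r fun i _ ↦ qPoch q e i * qPoch q z i,
        mul_sum, mul_sum, ← sum_add_distrib]
      refine sum_congr rfl fun p _ ↦ ?_
      have shift : qPoch q e p.1 * (1 - e * q ^ p.1) = (1 - e) * qPoch q (e * q) p.1 := by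
        rw [← qPoch_succ, qPoch_succ']
      rw [qPoch_succ, qPoch_succ]
      linear_combination qDiffCoeff q r p.1 * qPoch q e p.1 * qPoch q z p.1 *
        (e + z * (1 - e * q ^ p.1)) * pow_mul_inv_pow hq0 p.1 +
        qDiffCoeff q r p.1 * z * qPoch q z p.1 * shift
    · rw [ih, ih, sum_antidiagonal_succ_qBinom_mul hq r fun i l ↦ qPoch q z i * e ^ i * z ^ l,
        mul_sum, mul_sum, ← sum_add_distrib]
      refine sum_congr rfl fun p _ ↦ ?_
      rw [qPoch_succ, mul_pow]
      ring

end DifferenceCoefficient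

section Exchange

variable {q : ℂ}

lemma qDiffCoeff_mul_comm (hq0 : q ≠ 0) (i j l : ℕ) :
    qDiffCoeff q (i + (j + l)) i * qDiffCoeff q (j + l) j =
      qDiffCoeff q (j + (i + l)) j * qDiffCoeff q (i + l) i := by
  have split := (qPoch_add q (q⁻¹ ^ (i + (j + l))) i j).symm.trans
    ((congrArg _ (add_comm i j)).trans (qPoch_add q (q⁻¹ ^ (i + (j + l))) j i))
  rw [inv_pow_add_mul_pow hq0 i, add_left_comm i j l, inv_pow_add_mul_pow hq0 j] at split
  simp only [qDiffCoeff, add_left_comm i j l]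
  linear_combination q ^ i * q ^ j / (qPoch q q i * qPoch q q j) * split

lemma qDiffCoeff_mul_pow (hq0 : q ≠ 0) (hq : ¬IsOfFinOrder q) (i j : ℕ) :
    qDiffCoeff q (i + j) i * q ^ ((i + j) * i) =
      (-1) ^ i * q ^ (i.choose 2 + i) * qBinom q (i + j : ℕ) i := by
  have hi := qPoch_self_ne_zero hq i
  have hj := qPoch_self_ne_zero hq j
  have reverse := qPoch_inv_pow_mul_qPoch_self hq0 i j
  rw [qBinom_add_eq_div hq, qDiffCoeff]
  generalize qPoch q (q⁻¹ ^ (i + j)) i = x at reverse ⊢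
  field_simp
  linear_combination q ^ i * reverse

lemma qDiffCoeff_mul_qBinom (hq0 : q ≠ 0) (hq : ¬IsOfFinOrder q) (i j l : ℕ) :
    qDiffCoeff q (i + (j + l)) i * qBinom q (j + l : ℕ) j * q ^ (i * l) =
      qBinom q (i + j + l : ℕ) (i + j : ℕ) * qDiffCoeff q (i + j) i := by
  have trinomial : qBinom q (i + (j + l) : ℕ) i * qBinom q (j + l : ℕ) j =
      qBinom q (i + j + l : ℕ) (i + j : ℕ) * qBinom q (i + j : ℕ) i := by
    have hij := qPoch_self_ne_zero hq (i + j)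
    have hjl := qPoch_self_ne_zero hq (j + l)
    rw [qBinom_add_eq_div hq, qBinom_add_eq_div hq, qBinom_add_eq_div hq, qBinom_add_eq_div hq,
      add_assoc]
    field_simp
  apply mul_right_cancel₀ (pow_ne_zero ((i + j) * i) hq0)
  have hexp : q ^ (i * l) * q ^ ((i + j) * i) = q ^ ((i + (j + l)) * i) := by
    rw [← pow_add]; congr 1; ring
  linear_combination qDiffCoeff q (i + (j + l)) i * qBinom q (j + l : ℕ) j * hexp +
    qBinom q (j + l : ℕ) j * qDiffCoeff_mul_pow hq0 hq i (j + l) -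
    qBinom q (i + j + l : ℕ) (i + j : ℕ) * qDiffCoeff_mul_pow hq0 hq i j +
    (-1) ^ i * q ^ (i.choose 2 + i) * trinomial

end Exchange

/-- The terminating basic hypergeometric sum with numerator parameters `q⁻ᴿ` and `z`, argument
`x * q` and additional weights `β`. -/
noncomputable def qHypSum (q : ℂ) (β : ℕ → ℂ) (x z : ℂ) (R : ℕ) : ℂ :=
  ∑ p ∈ antidiagonal R, qDiffCoeff q R p.1 * qPoch q z p.1 * x ^ p.1 * β p.1

section Transformation

variable {q : ℂ}

theorem sum_qDiffCoeff_mul_qHypSum (hq0 : q ≠ 0) (hq : ¬IsOfFinOrder q) (β : ℕ → ℂ) (e z : ℂ)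
    (R : ℕ) :
    ∑ p ∈ antidiagonal R, qDiffCoeff q R p.1 * qPoch q e p.1 * qPoch q z p.1 *
        qHypSum q β e (z * q ^ p.1) p.2 =
      ∑ p ∈ antidiagonal R, qBinom q R p.1 * qPoch q z p.1 * e ^ p.1 * z ^ p.2 *
        qHypSum q β 1 0 p.1 := by
  simp only [qHypSum, mul_sum]
  calc
    _ = ∑ p ∈ antidiagonal R, ∑ s ∈ antidiagonal p.2, qDiffCoeff q (p.1 + (s.1 + s.2)) p.1 *
        qDiffCoeff q (s.1 + s.2) s.1 *
          (qPoch q e p.1 * qPoch q z (p.1 + s.1) * e ^ s.1 * β s.1) := by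
      refine sum_congr rfl fun p hp ↦ sum_congr rfl fun s hs ↦ ?_
      rw [HasAntidiagonal.mem_antidiagonal.mp hs, HasAntidiagonal.mem_antidiagonal.mp hp, qPoch_add]
      ring
    _ = ∑ p ∈ antidiagonal R, qDiffCoeff q R p.1 * qPoch q z p.1 * e ^ p.1 * β p.1 *
        ∑ s ∈ antidiagonal p.2,
          qDiffCoeff q p.2 s.1 * (qPoch q e s.1 * qPoch q (z * q ^ p.1) s.1) := by
      rw [sum_antidiagonal_left_comm R fun μ k j ↦ qDiffCoeff q (μ + (k + j)) μ *
        qDiffCoeff q (k + j) k * (qPoch q e μ * qPoch q z (μ + k) * e ^ k * β k)]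
      refine sum_congr rfl fun p hp ↦ (sum_congr rfl fun s hs ↦ ?_).trans (mul_sum ..).symm
      rw [qDiffCoeff_mul_comm hq0, HasAntidiagonal.mem_antidiagonal.mp hs,
        HasAntidiagonal.mem_antidiagonal.mp hp, add_comm s.1, qPoch_add]
      ring
    _ = ∑ p ∈ antidiagonal R, ∑ s ∈ antidiagonal p.2, qDiffCoeff q (p.1 + (s.1 + s.2)) p.1 *
        qPoch q z p.1 * e ^ p.1 * β p.1 * (qBinom q (s.1 + s.2 : ℕ) s.1 *
          (qPoch q (z * q ^ p.1) s.1 * e ^ s.1 * (z * q ^ p.1) ^ s.2)) := by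
      refine sum_congr rfl fun p hp ↦ ?_
      rw [sum_qDiffCoeff_mul_qPoch_mul_qPoch_eq_sum_qBinom hq0 hq, mul_sum]
      refine sum_congr rfl fun s hs ↦ ?_
      rw [HasAntidiagonal.mem_antidiagonal.mp hs, HasAntidiagonal.mem_antidiagonal.mp hp]
    _ = _ := by
      rw [← sum_antidiagonal_assoc R fun k j l ↦ qDiffCoeff q (k + (j + l)) k *
        qPoch q z k * e ^ k * β k *
        (qBinom q (j + l : ℕ) j * (qPoch q (z * q ^ k) j * e ^ j * (z * q ^ k) ^ l))]
      refine sum_congr rfl fun p hp ↦ sum_congr rfl fun s hs ↦ ?_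
      rw [← HasAntidiagonal.mem_antidiagonal.mp hp, ← HasAntidiagonal.mem_antidiagonal.mp hs,
        qPoch_zero_right, one_pow, qPoch_add, pow_add e, mul_pow, ← pow_mul]
      linear_combination qPoch q z s.1 * qPoch q (z * q ^ s.1) s.2 * e ^ s.1 * e ^ s.2 * z ^ p.2 *
        β s.1 * qDiffCoeff_mul_qBinom hq0 hq s.1 s.2 p.2

end Transformation

/-- The sequence `β` forming with `α` a Bailey pair relative to `a = q`, multiplied by
`(q;q)_s` and a constant; the quotient `(q;q)_s / (q;q)_{s - i}` is expressed through
`(q⁻ˢ;q)_i`, so the classical sequence of the pair is `(-1)^i * q ^ (i choose 2) * α i`. -/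
noncomputable def baileyBeta (q : ℂ) (α : ℕ → ℂ) (s : ℕ) : ℂ :=
  ∑ p ∈ antidiagonal s,
    α p.1 * (q ^ (s * p.1) * qPoch q (q⁻¹ ^ s) p.1 / qPoch q q (s + p.1 + 1))

section Bailey

variable {q : ℂ}

lemma qDiffCoeff_mul_qPoch_inv_pow (hq0 : q ≠ 0) (hq : ¬IsOfFinOrder q) (i j l : ℕ) :
    qDiffCoeff q (i + (j + l)) (i + j) * (q ^ ((i + j) * i) * qPoch q (q⁻¹ ^ (i + j)) i) =
      (-1) ^ i * q ^ (i.choose 2 + i) * qPoch q (q⁻¹ ^ (i + (j + l))) i *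
        qDiffCoeff q (j + l) j := by
  have hj := qPoch_self_ne_zero hq j
  have hij := qPoch_self_ne_zero hq (i + j)
  have reverse := qPoch_inv_pow_mul_qPoch_self hq0 i j
  rw [qDiffCoeff, qDiffCoeff, qPoch_add, inv_pow_add_mul_pow hq0]
  generalize qPoch q (q⁻¹ ^ (i + j)) i = x at reverse ⊢
  generalize qPoch q (q⁻¹ ^ (i + (j + l))) i = y
  generalize qPoch q (q⁻¹ ^ (j + l)) j = w
  field_simp
  linear_combination w * y * q ^ (i + j) * reverse

theorem qHypSum_baileyBeta (hq0 : q ≠ 0) (hq : ¬IsOfFinOrder q) (α : ℕ → ℂ) (c : ℂ) (r : ℕ) :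
    qHypSum q (baileyBeta q α) 1 c r =
      ∑ p ∈ antidiagonal r, α p.1 * ((-1) ^ p.1 * q ^ (p.1.choose 2 + p.1) *
        qPoch q (q⁻¹ ^ r) p.1 * qPoch q c p.1 / qPoch q q (r + p.1 + 1)) *
        ∏ i ∈ range p.2, (c * q ^ p.1 - q ^ (2 * p.1 + 2) * q ^ i) := by
  simp only [qHypSum, baileyBeta, mul_sum]
  calc
    _ = ∑ p ∈ antidiagonal r, ∑ s ∈ antidiagonal p.1, qDiffCoeff q (s.1 + (s.2 + p.2)) (s.1 + s.2) *
        qPoch q c (s.1 + s.2) * α s.1 * (q ^ ((s.1 + s.2) * s.1) *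
          qPoch q (q⁻¹ ^ (s.1 + s.2)) s.1 / qPoch q q (2 * s.1 + 1 + s.2)) := by
      refine sum_congr rfl fun p hp ↦ sum_congr rfl fun s hs ↦ ?_
      rw [← HasAntidiagonal.mem_antidiagonal.mp hp, ← HasAntidiagonal.mem_antidiagonal.mp hs,
        add_assoc, show s.1 + s.2 + s.1 + 1 = 2 * s.1 + 1 + s.2 by ring]
      ring
    _ = _ := by
      rw [sum_antidiagonal_assoc r fun ρ j l ↦ qDiffCoeff q (ρ + (j + l)) (ρ + j) *
        qPoch q c (ρ + j) * α ρ * (q ^ ((ρ + j) * ρ) *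
          qPoch q (q⁻¹ ^ (ρ + j)) ρ / qPoch q q (2 * ρ + 1 + j))]
      refine sum_congr rfl fun p hp ↦ ?_
      rw [← sum_qDiffCoeff_mul_qPoch_mul_qPoch hq0 hq, mul_sum]
      refine sum_congr rfl fun s hs ↦ ?_
      have coeff := qDiffCoeff_mul_qPoch_inv_pow hq0 hq p.1 s.1 s.2
      have inverse := inv_qPoch_self hq (2 * p.1 + 1 + s.1) s.2
      rw [HasAntidiagonal.mem_antidiagonal.mp hs] at coeff ⊢
      rw [HasAntidiagonal.mem_antidiagonal.mp hp] at coeff ⊢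
      rw [add_assoc (2 * p.1 + 1), HasAntidiagonal.mem_antidiagonal.mp hs,
        add_right_comm (2 * p.1 + 1), pow_add,
        show 2 * p.1 + 1 + p.2 = r + p.1 + 1 by
          rw [← HasAntidiagonal.mem_antidiagonal.mp hp]; ring] at inverse
      rw [div_eq_mul_inv, div_eq_mul_inv, inverse, qPoch_add]
      linear_combination qPoch q c p.1 * qPoch q (c * q ^ p.1) s.1 * α p.1 *
        (qPoch q q (r + p.1 + 1))⁻¹ * qPoch q (q ^ (2 * p.1 + 2) * q ^ s.1) s.2 * coeff

lemma pow_choose_two_mul_pow_mul_pow (q : ℂ) (i j : ℕ) :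
    q ^ (i.choose 2 + i) * (q ^ (2 * i + 2)) ^ j * q ^ j.choose 2 * q ^ (i * (i + 1)) =
      q ^ ((i + j).choose 2 + 2 * (i + j)) * q ^ ((i + j) * i) := by
  rw [choose_two_add]
  ring

theorem qHypSum_baileyBeta_zero (hq0 : q ≠ 0) (hq : ¬IsOfFinOrder q) (α : ℕ → ℂ) (s : ℕ) :
    qHypSum q (baileyBeta q α) 1 0 s =
      (-1) ^ s * q ^ (s.choose 2 + 2 * s) *
        baileyBeta q (fun i ↦ α i / q ^ (i * (i + 1))) s := by
  rw [qHypSum_baileyBeta hq0 hq, baileyBeta, mul_sum]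
  refine sum_congr rfl fun p hp ↦ ?_
  have hpow := pow_ne_zero (p.1 * (p.1 + 1)) hq0
  have htop := qPoch_self_ne_zero hq (s + p.1 + 1)
  have expo := pow_choose_two_mul_pow_mul_pow q p.1 p.2
  have product : ∏ i ∈ range p.2, (0 * q ^ p.1 - q ^ (2 * p.1 + 2) * q ^ i) =
      (-1) ^ p.2 * (q ^ (2 * p.1 + 2)) ^ p.2 * q ^ p.2.choose 2 := by
    simp only [zero_mul, zero_sub, ← neg_mul]
    rw [prod_mul_distrib, prod_const, card_range, prod_pow_eq_pow_sum, sum_range_id,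
      ← Nat.choose_two_right, neg_pow]
  rw [HasAntidiagonal.mem_antidiagonal.mp hp] at expo
  rw [product, qPoch_zero_right, show (-1 : ℂ) ^ s = (-1) ^ p.1 * (-1) ^ p.2 by
    rw [← pow_add, HasAntidiagonal.mem_antidiagonal.mp hp]]
  generalize qPoch q (q⁻¹ ^ s) p.1 = x
  field_simp
  linear_combination α p.1 * x * expo

theorem one_sub_mul_qHypSum_baileyBeta (hq0 : q ≠ 0) (hq : ¬IsOfFinOrder q) (α : ℕ → ℂ) (r : ℕ) :
    (1 - q ^ (r + 1)) * qHypSum q (baileyBeta q α) 1 (q ^ (r + 2)) r =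
      (-1) ^ r * q ^ (r.choose 2 + 2 * r) *
        ∑ i ∈ range (r + 1), (-1) ^ i * q ^ i.choose 2 * (α i / q ^ (i * (i + 1))) := by
  rw [qHypSum_baileyBeta hq0 hq, mul_sum, mul_sum, ← Nat.sum_antidiagonal_eq_sum_range_succ
    fun i _ ↦ (-1) ^ r * q ^ (r.choose 2 + 2 * r) *
      ((-1) ^ i * q ^ i.choose 2 * (α i / q ^ (i * (i + 1))))]
  refine sum_congr rfl fun p hp ↦ ?_
  have hr := HasAntidiagonal.mem_antidiagonal.mp hp
  have htop := qPoch_self_ne_zero hq (r + p.1 + 1)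
  have expo := pow_choose_two_mul_pow_mul_pow q p.1 p.2
  have reverse := qPoch_inv_pow_mul_qPoch_self hq0 p.1 p.2
  have product := prod_pow_sub_pow q (q ^ (2 * p.1 + 2)) p.2
  rw [← pow_add, show 2 * p.1 + 2 + p.2 = r + 2 + p.1 by lia, pow_add q _ p.1, neg_pow] at product
  rw [hr] at expo reverse
  rw [add_right_comm, qPoch_add, ← pow_succ', qPoch_self_succ] at htop ⊢
  rw [product, show (-1 : ℂ) ^ r = (-1) ^ p.1 * (-1) ^ p.2 by rw [← pow_add, hr]]
  have hr0 := left_ne_zero_of_mul (left_ne_zero_of_mul htop)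
  have hr1 := right_ne_zero_of_mul (left_ne_zero_of_mul htop)
  have hshift := right_ne_zero_of_mul htop
  have hrp := pow_ne_zero (r * p.1) hq0
  generalize qPoch q (q⁻¹ ^ r) p.1 = x at reverse ⊢
  field_simp
  apply mul_right_cancel₀ hrp
  linear_combination α p.1 * (q ^ (p.1.choose 2 + p.1) * (q ^ (2 * p.1 + 2)) ^ p.2 *
    q ^ p.2.choose 2 * q ^ (p.1 * (p.1 + 1))) * reverse +
    α p.1 * (-1) ^ p.1 * q ^ p.1.choose 2 * qPoch q q r * expo

theorem sum_qDiffCoeff_mul_qHypSum_baileyBeta (hq0 : q ≠ 0) (hq : ¬IsOfFinOrder q) (α : ℕ → ℂ)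
    (e : ℂ) {z : ℂ} (hz : z ≠ 0) (R : ℕ) :
    ∑ p ∈ antidiagonal R, qDiffCoeff q R p.1 * qPoch q e p.1 * qPoch q z p.1 *
        qHypSum q (baileyBeta q α) e (z * q ^ p.1) p.2 =
      z ^ R * qHypSum q (baileyBeta q fun i ↦ α i / q ^ (i * (i + 1)))
        (e * q ^ (R + 1) / z) z R := by
  rw [sum_qDiffCoeff_mul_qHypSum hq0 hq, qHypSum, mul_sum]
  refine sum_congr rfl fun p hp ↦ ?_
  have coeff := qDiffCoeff_mul_pow hq0 hq p.1 p.2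
  rw [HasAntidiagonal.mem_antidiagonal.mp hp] at coeff
  have hzp := pow_ne_zero p.1 hz
  have hzR : z ^ R = z ^ p.1 * z ^ p.2 := by
    rw [← pow_add, HasAntidiagonal.mem_antidiagonal.mp hp]
  rw [qHypSum_baileyBeta_zero hq0 hq, hzR, div_pow, mul_pow, ← pow_mul]
  generalize baileyBeta q _ p.1 = b
  field_simp
  linear_combination -b * qPoch q z p.1 * e ^ p.1 * q ^ p.1 * coeff

lemma sum_range_baileyBeta_telescope (hq0 : q ≠ 0) (hq : ¬IsOfFinOrder q) (s n : ℕ) :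
    (1 - q ^ s) * ∑ i ∈ range n,
        (1 - q ^ (2 * i + 1)) * (q ^ (s * i) * qPoch q (q⁻¹ ^ s) i / qPoch q q (s + i + 1)) =
      -(q ^ (s * n) * (1 - q ^ n) * qPoch q (q⁻¹ ^ s) n / qPoch q q (s + n)) := by
  induction n with
  | zero => simp
  | succ n ih =>
    have htop := qPoch_self_ne_zero hq (s + n + 1)
    have cancel := pow_mul_inv_pow hq0 s
    rw [sum_range_succ, mul_add, ih, ← add_assoc, qPoch_succ q (q⁻¹ ^ s)]
    rw [qPoch_self_succ] at htop ⊢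
    have hs := left_ne_zero_of_mul htop
    have hlast := right_ne_zero_of_mul htop
    generalize qPoch q (q⁻¹ ^ s) n = x
    generalize q⁻¹ ^ s = y at cancel ⊢
    field_simp
    linear_combination x * q ^ (s * n) * (q ^ (2 * n + 1) - q ^ n) * cancel

theorem baileyBeta_one_sub_pow (hq0 : q ≠ 0) (hq : ¬IsOfFinOrder q) (s : ℕ) :
    baileyBeta q (fun i ↦ 1 - q ^ (2 * i + 1)) s = if s = 0 then 1 else 0 := by
  split_ifs with hs
  · have := qPoch_self_ne_zero hq 1
    subst hs
    simp_all [baileyBeta, qPoch]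
  · refine (mul_eq_zero_iff_left (one_sub_pow_ne_zero hq hs)).mp ?_
    rw [baileyBeta, Nat.sum_antidiagonal_eq_sum_range_succ fun i _ ↦ (1 - q ^ (2 * i + 1)) *
      (q ^ (s * i) * qPoch q (q⁻¹ ^ s) i / qPoch q q (s + i + 1)),
      sum_range_baileyBeta_telescope hq0 hq, qPoch_inv_pow_zero hq0, mul_zero, zero_div, neg_zero]

end Bailey

/-- The sequence `α` obtained from that of the unit Bailey pair by `t` steps of the Bailey chain
in base `q⁻¹`, in the normalisation of `baileyBeta`. -/
noncomputable def chainAlpha (q : ℂ) (t i : ℕ) : ℂ :=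
  (1 - q ^ (2 * i + 1)) / q ^ (t * (i * (i + 1)))

/-- The part of the summand of the `(r + 1)`-colored Jones polynomial that depends only on the
largest summation index `m + 1`. -/
noncomputable def coloredWeight (q : ℂ) (r m : ℕ) : ℂ :=
  qPoch q (q ^ (r + 2)) m * qPoch q (q⁻¹ ^ r) m * q ^ (m + 1)

/-- The nested sum over the last `t` indices of a tuple in `{0, …, N - 1}`, of the weights `f` at
the last index times the factors of `UtProd`, where `m` is the index before them and `A` collects
the contribution of the earlier indices to the upper entries of the Gaussian binomials. -/
noncomputable def nestedSum (q : ℂ) (f : ℕ → ℂ) (N : ℕ) : ℕ → ℕ → ℕ → ℂ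
  | 0, _, m => f m
  | t + 1, A, m => q ^ ((m + 1) ^ 2) * ∑ k ∈ range N,
      qBinom q ((k : ℤ) + m + A) ((k : ℤ) - m) * nestedSum q f N t (A + 2 * m + 1) k

section NestedSum

variable {q : ℂ}

lemma chainAlpha_div_pow (q : ℂ) (t : ℕ) :
    (fun i ↦ chainAlpha q t i / q ^ (i * (i + 1))) = chainAlpha q (t + 1) := by
  funext i
  rw [chainAlpha, chainAlpha, div_div, ← pow_add, add_one_mul]

lemma qHypSum_baileyBeta_chainAlpha_zero (hq0 : q ≠ 0) (hq : ¬IsOfFinOrder q) (x z : ℂ) (R : ℕ) :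
    qHypSum q (baileyBeta q (chainAlpha q 0)) x z R = 1 := by
  have unit : chainAlpha q 0 = fun i ↦ 1 - q ^ (2 * i + 1) := by
    funext i; rw [chainAlpha, zero_mul, pow_zero, div_one]
  rw [unit, qHypSum, Nat.sum_antidiagonal_eq_sum_range_succ fun i _ ↦
    qDiffCoeff q R i * qPoch q z i * x ^ i * baileyBeta q (fun i ↦ 1 - q ^ (2 * i + 1)) i,
    sum_range_succ']
  simp [baileyBeta_one_sub_pow hq0 hq, qDiffCoeff_zero_right, qPoch_zero]

lemma coloredWeight_add (hq0 : q ≠ 0) (hq : ¬IsOfFinOrder q) (m k l : ℕ) :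
    coloredWeight q (m + (k + l)) (m + k) = coloredWeight q (m + (k + l)) m *
      (qPoch q (q ^ (m + (k + l) + 2 + m)) k * (qDiffCoeff q (k + l) k * qPoch q q k)) := by
  have hk := qPoch_self_ne_zero hq k
  rw [coloredWeight, coloredWeight, qDiffCoeff, qPoch_add, qPoch_add, inv_pow_add_mul_pow hq0,
    ← pow_add]
  generalize qPoch q (q⁻¹ ^ (m + (k + l))) m = x
  generalize qPoch q (q⁻¹ ^ (k + l)) k = y
  field_simp
  ring

lemma nestedSum_succ (q : ℂ) (f : ℕ → ℂ) (t A m R : ℕ) :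
    nestedSum q f (m + R + 1) (t + 1) A m = q ^ ((m + 1) ^ 2) * ∑ p ∈ antidiagonal R,
      qPoch q (q ^ (A + 2 * m + 1)) p.1 / qPoch q q p.1 *
        nestedSum q f (m + R + 1) t (A + 2 * m + 1) (m + p.1) := by
  have below : ∑ k ∈ range m, qBinom q ((k : ℤ) + m + A) ((k : ℤ) - m) *
      nestedSum q f (m + R + 1) t (A + 2 * m + 1) k = 0 :=
    sum_eq_zero fun k hk ↦ by rw [qBinom_of_neg q _ (by simpa using hk), zero_mul]
  rw [nestedSum, add_assoc m R 1, sum_range_add, ← add_assoc m R 1, below, zero_add,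
    Nat.sum_antidiagonal_eq_sum_range_succ fun k _ ↦
      qPoch q (q ^ (A + 2 * m + 1)) k / qPoch q q k *
        nestedSum q f (m + R + 1) t (A + 2 * m + 1) (m + k)]
  refine congrArg _ (sum_congr rfl fun k _ ↦ ?_)
  rw [← qBinom_add]
  congr 2 <;> push_cast <;> ring

theorem nestedSum_coloredWeight (hq0 : q ≠ 0) (hq : ¬IsOfFinOrder q) (t A m R : ℕ) :
    nestedSum q (coloredWeight q (m + R)) (m + R + 1) t A m =
      coloredWeight q (m + R) m * q ^ (t * (m + R + 1) ^ 2) *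
        qHypSum q (baileyBeta q (chainAlpha q t)) (q ^ A) (q ^ (m + R + 2 + m)) R := by
  induction t generalizing A m R with
  | zero => simp [nestedSum, qHypSum_baileyBeta_chainAlpha_zero hq0 hq]
  | succ t ih =>
    have hz : q ^ (m + R + 2 + m) ≠ 0 := pow_ne_zero _ hq0
    have argument : q ^ (A + 2 * m + 1) * q ^ (R + 1) / q ^ (m + R + 2 + m) = q ^ A := by
      rw [div_eq_iff hz, ← pow_add, ← pow_add]; congr 1; ring
    have key := sum_qDiffCoeff_mul_qHypSum_baileyBeta hq0 hq (chainAlpha q t)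
      (q ^ (A + 2 * m + 1)) hz R
    rw [chainAlpha_div_pow, argument, ← pow_mul] at key
    have summand : ∀ p ∈ antidiagonal R,
        qPoch q (q ^ (A + 2 * m + 1)) p.1 / qPoch q q p.1 *
          nestedSum q (coloredWeight q (m + R)) (m + R + 1) t (A + 2 * m + 1) (m + p.1) =
        coloredWeight q (m + R) m * q ^ (t * (m + R + 1) ^ 2) *
          (qDiffCoeff q R p.1 * qPoch q (q ^ (A + 2 * m + 1)) p.1 *
            qPoch q (q ^ (m + R + 2 + m)) p.1 * qHypSum q (baileyBeta q (chainAlpha q t))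
              (q ^ (A + 2 * m + 1)) (q ^ (m + R + 2 + m) * q ^ p.1) p.2) := by
      intro p hp
      have hne := qPoch_self_ne_zero hq p.1
      have inner := ih (A + 2 * m + 1) (m + p.1) p.2
      have weight := coloredWeight_add hq0 hq m p.1 p.2
      rw [add_assoc m, HasAntidiagonal.mem_antidiagonal.mp hp] at inner
      rw [HasAntidiagonal.mem_antidiagonal.mp hp] at weight
      rw [inner, weight, ← pow_add, add_assoc (m + R + 2)]
      field_simp
    rw [nestedSum_succ, sum_congr rfl summand, ← mul_sum, key]
    ring

lemma coloredWeight_eq (hq : ¬IsOfFinOrder q) (r m : ℕ) :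
    coloredWeight q r m =
      q * (qDiffCoeff q r m * qPoch q q m * qPoch q (q ^ (r + 2)) m) := by
  rw [coloredWeight, qDiffCoeff, pow_succ']
  generalize qPoch q (q⁻¹ ^ r) m = x
  field [qPoch_self_ne_zero hq m]

theorem sum_nestedSum_coloredWeight (hq0 : q ≠ 0) (hq : ¬IsOfFinOrder q) (t r : ℕ) :
    ∑ m ∈ range (r + 1), nestedSum q (coloredWeight q r) (r + 1) t 1 m =
      q * q ^ (t * (r + 1) ^ 2) * q ^ ((r + 2) * r) *
        qHypSum q (baileyBeta q (chainAlpha q (t + 1))) 1 (q ^ (r + 2)) r := by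
  have hz : q ^ (r + 2) ≠ 0 := pow_ne_zero _ hq0
  have key := sum_qDiffCoeff_mul_qHypSum_baileyBeta hq0 hq (chainAlpha q t) q hz r
  rw [chainAlpha_div_pow, ← pow_succ', div_self hz, ← pow_mul] at key
  rw [mul_assoc _ (q ^ ((r + 2) * r)), ← key, mul_sum, ← Nat.sum_antidiagonal_eq_sum_range_succ
    fun m _ ↦ nestedSum q (coloredWeight q r) (r + 1) t 1 m]
  refine sum_congr rfl fun p hp ↦ ?_
  have inner := nestedSum_coloredWeight hq0 hq t 1 p.1 p.2
  rw [HasAntidiagonal.mem_antidiagonal.mp hp, pow_one, pow_add q (r + 2)] at inner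
  rw [inner, coloredWeight_eq hq]
  ring

end NestedSum

/-- The product `UtProd` of the tuple `K + 1`, with `A + i` in place of the offset `1 + i` in
the upper entry of the `i`-th Gaussian binomial, so that it factors as the tuple loses its first
entry. -/
noncomputable def shiftedUtProd (q : ℂ) (A t : ℕ) (K : Fin (t + 1) → ℕ) : ℂ :=
  ∏ i : Fin t, (q ^ ((K i.castSucc + 1) ^ 2) *
    qBinom q ((K i.succ : ℤ) + K i.castSucc + A + (i : ℕ) +
        2 * ∑ j ∈ univ.filter (fun j : Fin (t + 1) ↦ (j : ℕ) < (i : ℕ)), (K j : ℤ))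
      ((K i.succ : ℤ) - K i.castSucc))

section Tuples

lemma UtProd_add_one (q : ℂ) (t : ℕ) (K : Fin (t + 1) → ℕ) :
    UtProd q t (fun i ↦ K i + 1) = shiftedUtProd q 1 t K := by
  refine prod_congr rfl fun i _ ↦ ?_
  congr 2
  · push_cast
    rw [sum_add_distrib, sum_const, Fin.card_filter_val_lt, min_eq_right (by lia)]
    simp only [mul_one, nsmul_eq_mul]
    ring
  · push_cast
    ring

lemma shiftedUtProd_succ (q : ℂ) (A t : ℕ) (K : Fin (t + 2) → ℕ) :
    shiftedUtProd q A (t + 1) K =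
      q ^ ((K 0 + 1) ^ 2) * qBinom q ((K 1 : ℤ) + K 0 + A) ((K 1 : ℤ) - K 0) *
        shiftedUtProd q (A + 2 * K 0 + 1) t (fun i ↦ K i.succ) := by
  rw [shiftedUtProd, Fin.prod_univ_succ]
  congr 1
  · simp
  · refine prod_congr rfl fun i _ ↦ ?_
    rw [← Fin.succ_castSucc]
    congr 2
    rw [sum_filter, sum_filter, Fin.sum_univ_succ]
    simp only [Fin.val_succ, Fin.val_zero, Nat.succ_pos, if_true, Nat.add_lt_add_iff_right]
    push_cast
    ring

lemma shiftedUtProd_eq_zero (q : ℂ) (A : ℕ) {t : ℕ} {K : Fin (t + 1) → ℕ} {i : Fin t}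
    (h : K i.succ < K i.castSucc) : shiftedUtProd q A t K = 0 :=
  prod_eq_zero (mem_univ i) <| by rw [qBinom_of_neg q _ (by lia), mul_zero]

lemma sum_fin_cons {α M : Type*} [Fintype α] [AddCommMonoid M] {n : ℕ}
    (f : (Fin (n + 1) → α) → M) :
    ∑ K, f K = ∑ a, ∑ K : Fin n → α, f (Fin.cons a K) := by
  rw [← (Fin.consEquiv fun _ ↦ α).sum_comp, Fintype.sum_prod_type]
  rfl

lemma sum_shiftedUtProd_cons (q : ℂ) (f : ℕ → ℂ) {N : ℕ} (t A : ℕ) (m : Fin N) :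
    ∑ K : Fin t → Fin N, f (Fin.cons (α := fun _ ↦ Fin N) m K (Fin.last t)) *
        shiftedUtProd q A t (fun i ↦ Fin.cons (α := fun _ ↦ Fin N) m K i) =
      nestedSum q f N t A m := by
  induction t generalizing A m with
  | zero => simp [nestedSum, shiftedUtProd]
  | succ t ih =>
    rw [sum_fin_cons, nestedSum, ← Fin.sum_univ_eq_sum_range
      (fun k ↦ qBinom q ((k : ℤ) + m + A) ((k : ℤ) - m) * nestedSum q f N t (A + 2 * m + 1) k),
      mul_sum]
    refine sum_congr rfl fun k _ ↦ ?_
    rw [← ih, mul_sum, mul_sum]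
    refine sum_congr rfl fun K _ ↦ ?_
    rw [shiftedUtProd_succ, ← Fin.succ_last, ← Fin.succ_zero_eq_one]
    simp only [Fin.cons_succ, Fin.cons_zero]
    ring

theorem sum_monotone_mul_UtProd (q : ℂ) (f : ℕ → ℂ) (t N : ℕ) :
    ∑ K ∈ univ.filter (fun K : Fin (t + 1) → Fin N ↦ ∀ i : Fin t, K i.castSucc ≤ K i.succ),
        f (K (Fin.last t)) * UtProd q t (fun i ↦ (K i : ℕ) + 1) =
      ∑ m ∈ range N, nestedSum q f N t 1 m := by
  simp only [UtProd_add_one q t fun _ ↦ _]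
  rw [← Fin.sum_univ_eq_sum_range (nestedSum q f N t 1), sum_filter_of_ne]
  · simp only [sum_fin_cons, sum_shiftedUtProd_cons]
  · intro K _ hne i
    by_contra! hlt
    exact hne (by rw [shiftedUtProd_eq_zero q 1 hlt, mul_zero])

end Tuples

section Evaluation

variable {q : ℂ}

theorem one_sub_mul_sum_nestedSum (hq0 : q ≠ 0) (hq : ¬IsOfFinOrder q) (t r : ℕ) :
    (1 - q ^ (r + 1)) * ∑ m ∈ range (r + 1), nestedSum q (coloredWeight q r) (r + 1) t 1 m =
      (-1) ^ r * q ^ (t * (r + 1) ^ 2 + (r + 2) * r + r.choose 2 + 2 * r + 1) *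
        ∑ i ∈ range (r + 1), (-1) ^ i * q ^ i.choose 2 * chainAlpha q (t + 2) i := by
  have diagonal := one_sub_mul_qHypSum_baileyBeta hq0 hq (chainAlpha q (t + 1)) r
  simp only [congrFun (chainAlpha_div_pow q (t + 1))] at diagonal
  rw [sum_nestedSum_coloredWeight hq0 hq]
  linear_combination q * q ^ (t * (r + 1) ^ 2) * q ^ ((r + 2) * r) * diagonal

theorem sum_Icc_neg_one_zpow_mul_zpow (hq0 : q ≠ 0) (t N : ℕ) :
    ∑ k ∈ Icc (-(N : ℤ)) ((N : ℤ) - 1),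
        (-1 : ℂ) ^ k * q ^ (-(2 * (t : ℤ) + 3) * k * (k + 1) / 2 + k) =
      -q⁻¹ * ∑ i ∈ range N, (-1) ^ i * q ^ i.choose 2 * chainAlpha q (t + 2) i := by
  rw [sum_Icc_neg_eq_sum_range, mul_sum]
  refine sum_congr rfl fun i _ ↦ ?_
  have triangle : (i : ℤ) * (i + 1) = 2 * (i.choose 2 + i) := by
    have := two_mul_choose_two_succ i
    rw [choose_two_succ] at this
    exact_mod_cast this.symm
  have quadratic (k : ℤ) (hk : k * (k + 1) = i * (i + 1)) :
      -(2 * (t : ℤ) + 3) * k * (k + 1) / 2 = i.choose 2 + i - (t + 2) * (i * (i + 1)) := by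
    apply Int.ediv_eq_of_eq_mul_right two_ne_zero
    linear_combination -(2 * (t : ℤ) + 3) * hk + triangle
  have sign : (-1 : ℂ) ^ (-(i : ℤ) - 1) = -(-1) ^ i := by
    rw [show -(i : ℤ) - 1 = -((i + 1 : ℕ) : ℤ) by push_cast; ring, zpow_neg, zpow_natCast,
      ← inv_pow, inv_neg_one, pow_succ, mul_neg_one]
  rw [quadratic i rfl, quadratic (-i - 1) (by ring), sign, chainAlpha, zpow_natCast]
  have expand (k : ℤ) : q ^ ((i.choose 2 : ℤ) + i - (t + 2) * (i * (i + 1)) + k) =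
      q ^ i.choose 2 * q ^ i / q ^ ((t + 2) * (i * (i + 1))) * q ^ k := by
    rw [zpow_add₀ hq0, zpow_sub₀ hq0, zpow_add₀ hq0]
    norm_cast
  rw [expand, expand, zpow_sub₀ hq0, zpow_neg, zpow_natCast, zpow_one]
  field_simp
  ring

lemma ediv_two_exponent (t r : ℕ) :
    ((r + 1 : ℕ) : ℤ) * ((2 * (t : ℤ) + 3) * (r + 1 : ℕ) + 1) / 2 =
      (t * (r + 1) ^ 2 + (r + 2) * r + r.choose 2 + 2 * r + 2 : ℕ) := by
  apply Int.ediv_eq_of_eq_mul_right two_ne_zero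
  have triangle := two_mul_choose_two_succ r
  rw [choose_two_succ] at triangle
  zify at triangle
  push_cast
  linear_combination -triangle

end Evaluation

theorem stmt5_general (t N : ℕ) (q : ℂ) (hq0 : q ≠ 0) (hq : ¬IsOfFinOrder q) :
    (1 - q ^ N) * q ^ (-(t : ℤ) - 1) *
      ∑ k ∈ Finset.univ.filter
          (fun k : Fin (t+1) → Fin N => ∀ i : Fin t, k i.castSucc ≤ k i.succ),
        qPoch q (q ^ (1 + (N : ℤ))) ((k (Fin.last t) : ℕ)) *
          qPoch q (q ^ (1 - (N : ℤ))) ((k (Fin.last t) : ℕ)) *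
          q ^ ((k (Fin.last t) : ℕ) + 1) *
          UtProd q t (fun i => (k i : ℕ) + 1) =
    (-1 : ℂ) ^ N * q ^ (-(t : ℤ) - 1 + (N : ℤ) * ((2 * (t : ℤ) + 3) * N + 1) / 2) *
      ∑ k ∈ Finset.Icc (-(N : ℤ)) ((N : ℤ) - 1),
        (-1 : ℂ) ^ k * q ^ (-(2 * (t : ℤ) + 3) * k * (k + 1) / 2 + k) := by
  obtain _ | r := N
  · simp
  have weight (m : ℕ) : qPoch q (q ^ (1 + ((r + 1 : ℕ) : ℤ))) m *
      qPoch q (q ^ (1 - ((r + 1 : ℕ) : ℤ))) m * q ^ (m + 1) = coloredWeight q r m := by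
    rw [coloredWeight, show 1 + ((r + 1 : ℕ) : ℤ) = (r + 2 : ℕ) by push_cast; ring,
      show 1 - ((r + 1 : ℕ) : ℤ) = -(r : ℤ) by push_cast; ring, zpow_neg, zpow_natCast,
      zpow_natCast, inv_pow]
  simp only [weight]
  rw [sum_monotone_mul_UtProd, mul_right_comm, one_sub_mul_sum_nestedSum hq0 hq,
    sum_Icc_neg_one_zpow_mul_zpow hq0, ediv_two_exponent, zpow_add₀ hq0 (-(t : ℤ) - 1),
    zpow_natCast]
  field_simp
  ring

/-- `(1-q^N)·U_t(-q^N;q)` equals the defining expression of the colored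
Jones polynomial of the left-handed torus knot `T*_{(2,2t+1)}`; the paper's `t` is
`t+1` here (so `2t+1 = 2t+3`). -/
theorem stmt5 (t N : ℕ) (hN : 1 ≤ N) (q : ℂ)
    (hq0 : 0 < ‖q‖) (hq1 : ‖q‖ < 1) :
    (1 - q ^ N) * q ^ (-(t : ℤ) - 1) *
      ∑ k ∈ Finset.univ.filter
          (fun k : Fin (t+1) → Fin N => ∀ i : Fin t, k i.castSucc ≤ k i.succ),
        qPoch q (q ^ (1 + (N : ℤ))) ((k (Fin.last t) : ℕ)) *
          qPoch q (q ^ (1 - (N : ℤ))) ((k (Fin.last t) : ℕ)) *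
          q ^ ((k (Fin.last t) : ℕ) + 1) *
          UtProd q t (fun i => (k i : ℕ) + 1) =
    (-1 : ℂ) ^ N * q ^ (-(t : ℤ) - 1 + (N : ℤ) * ((2 * (t : ℤ) + 3) * N + 1) / 2) *
      ∑ k ∈ Finset.Icc (-(N : ℤ)) ((N : ℤ) - 1),
        (-1 : ℂ) ^ k * q ^ (-(2 * (t : ℤ) + 3) * k * (k + 1) / 2 + k) := by
  exact stmt5_general t N q (norm_pos_iff.mp hq0) fun h ↦ hq1.ne h.norm_eq_one
end

section
/- Let q ∈ ℂ with 0 < |q| < 1 (or more generally with (q;q)_{b-a} ≠ 0 and q ≠ 0), let w ∈ ℂ, and let a ≤ b be nonnegative integers. Then Σ_{n=a}^{b} (-1)^n (1 - w q^n) q^{n(n-1)/2 - a n} / ( (q;q)_{b-n} (q;q)_{n-a} ) equals (-1)^a q^{-a(a+1)/2} (1 - w q^a) if a = b, and equals (-1)^{a+1} w q^{-a(a-1)/2} if a < b. -/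
open Finset

/-! Substituting `n = a + k` and `b = a + N` turns the exponent `n(n-1)/2 - an` into
`k(k-1)/2 - a(a+1)/2`, so the factor `1 - w q^n` splits the sum into two instances of the
`q`-binomial theorem
`∑_{i+j=N} (-1)^i q^{i(i-1)/2} x^i / ((q;q)_i (q;q)_j) = (x;q)_N / (q;q)_N`,
one at `x = 1`, where `(1;q)_N` vanishes unless `N = 0`, and one at `x = q`, where the right-hand
side is `1`. -/

section QPochhammer

variable {R : Type*} [CommRing R] {q : R} {n : ℕ}

/-- The finite `q`-Pochhammer symbol `(a;q)_n` over a commutative ring; over `ℂ` it is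
definitionally `qPoch`. -/
def qPochhammer (q a : R) (n : ℕ) : R := ∏ j ∈ range n, (1 - a * q ^ j)

lemma qPochhammer_zero (q a : R) : qPochhammer q a 0 = 1 := prod_range_zero _

lemma qPochhammer_succ (q a : R) (n : ℕ) :
    qPochhammer q a (n + 1) = qPochhammer q a n * (1 - a * q ^ n) :=
  prod_range_succ _ n

lemma qPochhammer_self_succ (q : R) (n : ℕ) :
    qPochhammer q q (n + 1) = qPochhammer q q n * (1 - q ^ (n + 1)) := by
  rw [qPochhammer_succ, pow_succ']

lemma qPochhammer_one_eq_zero (q : R) (hn : n ≠ 0) : qPochhammer q 1 n = 0 :=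
  prod_eq_zero (mem_range.2 hn.pos) (by simp)

lemma one_sub_pow_succ_ne_zero {i : ℕ} (hq : qPochhammer q q n ≠ 0) (hi : i < n) :
    1 - q ^ (i + 1) ≠ 0 := fun h =>
  hq (prod_eq_zero (mem_range.2 hi) (by rwa [← pow_succ']))

end QPochhammer

section QBinomial

variable {K : Type*} [Field K] {q : K}

/-- The term `(-1)^i q^{i(i-1)/2} x^i / ((q;q)_i (q;q)_j)` of the `q`-binomial theorem, indexed
symmetrically by `i + j = N` and divided by `(q;q)_N`. -/
def qBinomialTerm (q x : K) (i j : ℕ) : K :=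
  (-1) ^ i * q ^ i.choose 2 * x ^ i / (qPochhammer q q i * qPochhammer q q j)

lemma one_sub_pow_mul_qBinomialTerm_succ_left (x : K) {i : ℕ} (j : ℕ)
    (hi : 1 - q ^ (i + 1) ≠ 0) :
    (1 - q ^ (i + 1)) * qBinomialTerm q x (i + 1) j = -(x * q ^ i) * qBinomialTerm q x i j := by
  have hchoose : (i + 1).choose 2 = i + i.choose 2 := by
    rw [Nat.choose_succ_succ' i 1, Nat.choose_one_right]
  rw [qBinomialTerm, qBinomialTerm, qPochhammer_self_succ, hchoose]
  field_simp
  ring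

lemma one_sub_pow_mul_qBinomialTerm_succ_right (x : K) (i : ℕ) {j : ℕ}
    (hj : 1 - q ^ (j + 1) ≠ 0) :
    (1 - q ^ (j + 1)) * qBinomialTerm q x i (j + 1) = qBinomialTerm q x i j := by
  rw [qBinomialTerm, qBinomialTerm, qPochhammer_self_succ]
  field_simp

lemma one_sub_pow_mul_sum_qBinomialTerm_succ (x : K) {N : ℕ}
    (hq : qPochhammer q q (N + 1) ≠ 0) :
    (1 - q ^ (N + 1)) * ∑ p ∈ antidiagonal (N + 1), qBinomialTerm q x p.1 p.2 =
      (1 - x * q ^ N) * ∑ p ∈ antidiagonal N, qBinomialTerm q x p.1 p.2 := by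
  have hright : ∑ p ∈ antidiagonal (N + 1), (1 - q ^ p.2) * qBinomialTerm q x p.1 p.2 =
      ∑ p ∈ antidiagonal N, qBinomialTerm q x p.1 p.2 := by
    rw [Nat.sum_antidiagonal_succ', pow_zero, sub_self, zero_mul, zero_add]
    refine sum_congr rfl fun p hp => one_sub_pow_mul_qBinomialTerm_succ_right x p.1 ?_
    exact one_sub_pow_succ_ne_zero hq (Nat.antidiagonal.snd_lt hp)
  have hleft : ∑ p ∈ antidiagonal (N + 1), q ^ p.2 * ((1 - q ^ p.1) * qBinomialTerm q x p.1 p.2) =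
      -(x * q ^ N) * ∑ p ∈ antidiagonal N, qBinomialTerm q x p.1 p.2 := by
    rw [Nat.sum_antidiagonal_succ, pow_zero, sub_self, zero_mul, mul_zero, zero_add, mul_sum]
    refine sum_congr rfl fun p hp => ?_
    rw [one_sub_pow_mul_qBinomialTerm_succ_left x p.2
      (one_sub_pow_succ_ne_zero hq (Nat.antidiagonal.fst_lt hp)),
      ← mem_antidiagonal.1 hp]
    ring
  calc (1 - q ^ (N + 1)) * ∑ p ∈ antidiagonal (N + 1), qBinomialTerm q x p.1 p.2
    _ = ∑ p ∈ antidiagonal (N + 1), ((1 - q ^ p.2) * qBinomialTerm q x p.1 p.2 +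
          q ^ p.2 * ((1 - q ^ p.1) * qBinomialTerm q x p.1 p.2)) := by
      rw [mul_sum]
      refine sum_congr rfl fun p hp => ?_
      rw [← mem_antidiagonal.1 hp]
      ring
    _ = (1 - x * q ^ N) * ∑ p ∈ antidiagonal N, qBinomialTerm q x p.1 p.2 := by
      rw [sum_add_distrib, hright, hleft]
      ring

theorem sum_antidiagonal_qBinomialTerm (x : K) {N : ℕ} (hq : qPochhammer q q N ≠ 0) :
    ∑ p ∈ antidiagonal N, qBinomialTerm q x p.1 p.2 = qPochhammer q x N / qPochhammer q q N := by
  induction N with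
  | zero => simp [qBinomialTerm, qPochhammer_zero]
  | succ N ih =>
    obtain ⟨hN, hlast⟩ := mul_ne_zero_iff.1 (qPochhammer_self_succ q N ▸ hq)
    apply mul_left_cancel₀ hlast
    rw [one_sub_pow_mul_sum_qBinomialTerm_succ x hq, ih hN, qPochhammer_succ q x,
      qPochhammer_self_succ]
    field_simp

end QBinomial

lemma natCast_choose_two (k : ℕ) : (k.choose 2 : ℤ) = k * (k - 1) / 2 := by
  rw [Nat.choose_two_right]
  cases k <;> simp

lemma add_mul_add_sub_one_ediv_two_sub_mul (a k : ℤ) :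
    (a + k) * (a + k - 1) / 2 - a * (a + k) = -(a * (a + 1) / 2) + k * (k - 1) / 2 := by
  have hsplit : (a + k) * (a + k - 1) = k * (k - 1) - a * (a + 1) + 2 * (a * (a + k)) := by ring
  have heven : 2 ∣ a * (a + 1) := (Int.even_mul_succ_self a).two_dvd
  rw [hsplit, Int.add_mul_ediv_left _ _ two_ne_zero, Int.sub_ediv_of_dvd _ heven]
  ring

lemma mul_add_one_ediv_two (a : ℤ) : a * (a + 1) / 2 = a * (a - 1) / 2 + a := by
  rw [← Int.add_mul_ediv_left _ _ two_ne_zero]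
  ring_nf

lemma sum_Icc_add_eq_sum_antidiagonal {M : Type*} [AddCommMonoid M] (f : ℕ → M) (a N : ℕ) :
    ∑ n ∈ Icc a (a + N), f n = ∑ p ∈ antidiagonal N, f (a + p.1) := by
  rw [Nat.sum_antidiagonal_eq_sum_range_succ (fun i _ => f (a + i)), Nat.succ_eq_add_one,
    ← Ico_add_one_right_eq_Icc, sum_Ico_eq_sum_range, add_assoc, Nat.add_sub_cancel_left]

section Evaluation

variable {K : Type*} [Field K] {q : K}

lemma shifted_summand_eq_qBinomialTerm (w : K) (hq0 : q ≠ 0) (a i j : ℕ) :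
    (-1) ^ (a + i) * (1 - w * q ^ (a + i)) *
          q ^ (((a + i : ℕ) : ℤ) * (((a + i : ℕ) : ℤ) - 1) / 2 - (a : ℤ) * (a + i : ℕ)) /
        (qPochhammer q q j * qPochhammer q q i) =
      (-1) ^ a * q ^ (-((a : ℤ) * (a + 1) / 2)) *
        (qBinomialTerm q 1 i j - w * q ^ a * qBinomialTerm q q i j) := by
  rw [Nat.cast_add, add_mul_add_sub_one_ediv_two_sub_mul, ← natCast_choose_two, zpow_add₀ hq0,
    zpow_natCast, qBinomialTerm, qBinomialTerm]
  ring

lemma sum_Icc_eq_qPochhammer_div (w : K) (a : ℕ) {N : ℕ} (hq0 : q ≠ 0)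
    (hq : qPochhammer q q N ≠ 0) :
    ∑ n ∈ Icc a (a + N),
      (-1) ^ n * (1 - w * q ^ n) * q ^ ((n : ℤ) * ((n : ℤ) - 1) / 2 - (a : ℤ) * n) /
        (qPochhammer q q (a + N - n) * qPochhammer q q (n - a)) =
      (-1) ^ a * q ^ (-((a : ℤ) * (a + 1) / 2)) *
        (qPochhammer q 1 N / qPochhammer q q N - w * q ^ a) := by
  have hself : ∑ p ∈ antidiagonal N, qBinomialTerm q q p.1 p.2 = 1 :=
    (sum_antidiagonal_qBinomialTerm q hq).trans (div_self hq)
  calc _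
    _ = ∑ p ∈ antidiagonal N, (-1) ^ a * q ^ (-((a : ℤ) * (a + 1) / 2)) *
          (qBinomialTerm q 1 p.1 p.2 - w * q ^ a * qBinomialTerm q q p.1 p.2) := by
      rw [sum_Icc_add_eq_sum_antidiagonal]
      refine sum_congr rfl fun p hp => ?_
      rw [← mem_antidiagonal.1 hp, Nat.add_sub_add_left, Nat.add_sub_cancel_left,
        Nat.add_sub_cancel_left, shifted_summand_eq_qBinomialTerm w hq0]
    _ = (-1) ^ a * q ^ (-((a : ℤ) * (a + 1) / 2)) *
          (qPochhammer q 1 N / qPochhammer q q N - w * q ^ a) := by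
      rw [← mul_sum, sum_sub_distrib, ← mul_sum, sum_antidiagonal_qBinomialTerm 1 hq, hself,
        mul_one]

end Evaluation

theorem stmt9_general {K : Type*} [Field K] (q w : K) {a b : ℕ} (hab : a ≤ b) (hq0 : q ≠ 0)
    (hq : qPochhammer q q (b - a) ≠ 0) :
    ∑ n ∈ Icc a b,
      (-1) ^ n * (1 - w * q ^ n) * q ^ ((n : ℤ) * ((n : ℤ) - 1) / 2 - (a : ℤ) * n) /
        (qPochhammer q q (b - n) * qPochhammer q q (n - a)) =
    if a = b then
      (-1) ^ a * q ^ (-((a : ℤ) * ((a : ℤ) + 1) / 2)) * (1 - w * q ^ a)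
    else
      (-1) ^ (a + 1) * w * q ^ (-((a : ℤ) * ((a : ℤ) - 1) / 2)) := by
  obtain ⟨N, rfl⟩ := Nat.exists_eq_add_of_le hab
  rw [Nat.add_sub_cancel_left] at hq
  rw [sum_Icc_eq_qPochhammer_div w a hq0 hq]
  split_ifs with hN
  · obtain rfl : N = 0 := by omega
    rw [qPochhammer_zero, qPochhammer_zero, div_one]
  · have hpow : q ^ (-((a : ℤ) * (a - 1) / 2)) = q ^ (-((a : ℤ) * (a + 1) / 2)) * q ^ a := by
      rw [← zpow_natCast q a, ← zpow_add₀ hq0, mul_add_one_ediv_two, neg_add, neg_add_cancel_right]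
    rw [qPochhammer_one_eq_zero q (by omega), zero_div, hpow]
    ring

/-- the evaluation
`Σ_{n=a}^{b} (-1)^n (1 - w q^n) q^{n(n-1)/2 - an}/((q;q)_{b-n}(q;q)_{n-a})`
equals `(-1)^a q^{-a(a+1)/2}(1 - w q^a)` if `a = b` and `(-1)^{a+1} w q^{-a(a-1)/2}`
otherwise, under the hypotheses `q ≠ 0` and `(q;q)_{b-a} ≠ 0` (which hold in
particular for `0 < |q| < 1`). -/
theorem stmt9 (q w : ℂ) (a b : ℕ) (hab : a ≤ b) (hq0 : q ≠ 0)
    (hq : qPoch q q (b - a) ≠ 0) :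
    ∑ n ∈ Finset.Icc a b,
      (-1 : ℂ) ^ n * (1 - w * q ^ n) *
          q ^ ((n : ℤ) * ((n : ℤ) - 1) / 2 - (a : ℤ) * n) /
        (qPoch q q (b - n) * qPoch q q (n - a)) =
    if a = b then
      (-1 : ℂ) ^ a * q ^ (-((a : ℤ) * ((a : ℤ) + 1) / 2)) * (1 - w * q ^ a)
    else
      (-1 : ℂ) ^ (a + 1) * w * q ^ (-((a : ℤ) * ((a : ℤ) - 1) / 2)) :=
  stmt9_general q w hab hq0 hq
end
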